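/- arXiv:1008.3514 — 4 statements merged into one kernel-verified Lean document; each statement's English description precedes it below -/
import Mathlib

section
/- (Gibbs tail bound.) Let U satisfy Assumption 1 and let μ be the associated Gibbs measure. Then there exists a constant E_c > 0 such that μ({x ∈ ℝ^n : U(x) ≥ E}) ≤ exp(−βE/2) for all E > E_c. -/
open MeasureTheory Real Filter
open scoped ENNReal

noncomputable section

abbrev Euc (n : ℕ) := EuclideanSpace ℝ (Fin n)

/-- Second derivative of `U` at `x` as a bilinear form. -/
def D2 {n : ℕ} (U : Euc n → ℝ) (x v w : Euc n) : ℝ :=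
  iteratedFDeriv ℝ 2 U x ![v, w]

/-- Laplacian of `U` at `x`. -/
def lapl {n : ℕ} (U : Euc n → ℝ) (x : Euc n) : ℝ :=
  ∑ i, D2 U x (EuclideanSpace.single i 1) (EuclideanSpace.single i 1)

/-- Assumption 1 on the potential `U`. -/
structure Assumption1 (n : ℕ) (β : ℝ) (U : Euc n → ℝ) where
  smooth : ContDiff ℝ 4 U
  c : ℝ
  d : ℝ
  EB : ℝ
  c_pos : 0 < c
  c_lt : c < β
  d_pos : 0 < d
  one_le : ∀ x, 1 ≤ U x
  quad_growth : ∀ C > (0:ℝ), ∃ E > (0:ℝ), ∀ x, U x > E → C * (1 + ‖x‖ ^ 2) ≤ U x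
  driftB : ∀ x, U x > EB → lapl U x ≤ c * ‖gradient U x‖ ^ 2 - d * U x
  hess_lb : ∃ C : ℝ, 0 ≤ C ∧ ∀ x η : Euc n, -C * ‖η‖ ^ 2 ≤ D2 U x η η
  deriv_bound : ∃ C > (0:ℝ), ∀ x,
    ‖iteratedFDeriv ℝ 4 U x‖ ⊔ ‖iteratedFDeriv ℝ 3 U x‖ ⊔ ‖iteratedFDeriv ℝ 2 U x‖ ⊔
      ‖gradient U x‖ ≤ C * U x

/-- The Gibbs measure with density `Z⁻¹ exp(-β U x)`. -/
def gibbs (n : ℕ) (β : ℝ) (U : Euc n → ℝ) : Measure (Euc n) :=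
  volume.withDensity fun x => ENNReal.ofReal (exp (-β * U x) / ∫ y, exp (-β * U y))

/-- Total variation distance, `‖μ - ν‖_TV = 2 sup_A |μ(A) - ν(A)|`. -/
def tvDist {α : Type*} [MeasurableSpace α] (μ ν : Measure α) : ℝ :=
  2 * ⨆ A : {A : Set α // MeasurableSet A}, |(μ A.1).toReal - (ν A.1).toReal|

/-- Forward Euler transition density `q_h(x,y)`. -/
def eulerDensity (n : ℕ) (β h : ℝ) (U : Euc n → ℝ) (x y : Euc n) : ℝ :=
  (4 * π * β⁻¹ * h) ^ (-(n : ℝ) / 2) *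
    exp (-‖y - x + h • gradient U x‖ ^ 2 / (4 * β⁻¹ * h))

/-- MALA acceptance probability `α_h(x,y)`. -/
def accept (n : ℕ) (β h : ℝ) (U : Euc n → ℝ) (x y : Euc n) : ℝ :=
  min 1 ((eulerDensity n β h U y x * exp (-β * U y)) /
         (eulerDensity n β h U x y * exp (-β * U x)))

/-- One-step MALA transition kernel. -/
def malaKernel (n : ℕ) (β h : ℝ) (U : Euc n → ℝ) (x : Euc n) : Measure (Euc n) :=
  volume.withDensity (fun y => ENNReal.ofReal (accept n β h U x y * eulerDensity n β h U x y))
  + (1 - ∫⁻ y, ENNReal.ofReal (accept n β h U x y * eulerDensity n β h U x y)) • Measure.dirac x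

/-- `k`-step iterate of a transition kernel. -/
def iterKernel {α : Type*} [MeasurableSpace α] (κ : α → Measure α) : ℕ → α → Measure α
  | 0, x => Measure.dirac x
  | k + 1, x => (iterKernel κ k x).bind κ

/-- The level set `R_h = {x : U(x) < E_⋆ h^{-1/4}}`. -/
def Rset (n : ℕ) (h Estar : ℝ) (U : Euc n → ℝ) : Set (Euc n) :=
  {x | U x < Estar * h ^ (-(1:ℝ) / 4)}

open scoped Classical in
/-- Patched MALA acceptance probability. -/
def acceptBar (n : ℕ) (β h Estar : ℝ) (U : Euc n → ℝ) (x y : Euc n) : ℝ :=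
  if x ∈ Rset n h Estar U ∧ y ∈ Rset n h Estar U then accept n β h U x y else 0

/-- One-step patched MALA transition kernel. -/
def patchedKernel (n : ℕ) (β h Estar : ℝ) (U : Euc n → ℝ) (x : Euc n) : Measure (Euc n) :=
  volume.withDensity
    (fun y => ENNReal.ofReal (acceptBar n β h Estar U x y * eulerDensity n β h U x y))
  + (1 - ∫⁻ y, ENNReal.ofReal (acceptBar n β h Estar U x y * eulerDensity n β h U x y)) •
      Measure.dirac x

/-- Standard Gaussian measure `N(0, I)` on `ℝ^n`. -/
def stdGaussian (n : ℕ) : Measure (Euc n) :=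
  volume.withDensity fun ξ => ENNReal.ofReal ((2 * π) ^ (-(n : ℝ) / 2) * exp (-‖ξ‖ ^ 2 / 2))

/-- Forward Euler transition kernel. -/
def eulerKernel (n : ℕ) (β h : ℝ) (U : Euc n → ℝ) (x : Euc n) : Measure (Euc n) :=
  volume.withDensity fun y => ENNReal.ofReal (eulerDensity n β h U x y)


/-- Gibbs tail bound. -/
theorem gibbs_tail_bound (n : ℕ) (β : ℝ) (hβ : 0 < β)
    (U : Euc n → ℝ) (hU : Assumption1 n β U) :
    ∃ Ec > (0:ℝ), ∀ E : ℝ, E > Ec →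
      gibbs n β U {x | E ≤ U x} ≤ ENNReal.ofReal (exp (-β * E / 2)) := by
  set Z := ∫ y, exp (-β * U y) with hZ
  set G := ∫ x : Euc n, rexp (-(β/4) * ‖x‖^2) with hG
  have hZ0 : 0 ≤ Z := integral_nonneg fun _ => (exp_pos _).le
  have hG0 : 0 ≤ G := integral_nonneg fun _ => (exp_pos _).le
  have hint : Integrable (fun x : Euc n => rexp (-(β/4) * ‖x‖^2)) := by
    have h := GaussianFourier.integrable_cexp_neg_mul_sq_norm_add (V := Euc n)
      (b := ((β/4 : ℝ) : ℂ)) (by simpa using hβ) 0 0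
    have h2 := h.norm
    refine h2.congr (Eventually.of_forall fun x => ?_)
    simp only [Complex.norm_exp]
    congr 1
    simp [← Complex.ofReal_pow, ← Complex.ofReal_mul, ← Complex.ofReal_neg]
    try norm_cast
  obtain ⟨E0, hE0, hq⟩ := hU.quad_growth 1 one_pos
  have hK : 0 ≤ G / Z := div_nonneg hG0 hZ0
  refine ⟨E0 + 4 * (G / Z) / β, by positivity, fun E hE => ?_⟩
  have hE1 : E0 < E := lt_of_le_of_lt (le_add_of_nonneg_right (by positivity)) hE
  have hE2 : 4 * (G / Z) / β < E := lt_of_le_of_lt (le_add_of_nonneg_left hE0.le) hE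
  have hms : MeasurableSet {x | E ≤ U x} :=
    (isClosed_le continuous_const hU.smooth.continuous).measurableSet
  unfold gibbs
  rw [withDensity_apply _ hms]
  calc ∫⁻ x in {x | E ≤ U x}, ENNReal.ofReal (exp (-β * U x) / Z)
      ≤ ∫⁻ x in {x | E ≤ U x},
          ENNReal.ofReal ((exp (-(3 * β * E / 4)) / Z) * rexp (-(β/4) * ‖x‖^2)) := by
        refine setLIntegral_mono' hms fun x hx => ENNReal.ofReal_le_ofReal ?_
        have hx' : E ≤ U x := hx
        have h1 := hq x (lt_of_lt_of_le hE1 hx')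
        rw [div_mul_eq_mul_div]
        refine div_le_div_of_nonneg_right ?_ hZ0
        rw [← Real.exp_add]
        refine Real.exp_le_exp.2 ?_
        nlinarith [mul_nonneg hβ.le (sub_nonneg.2 hx'), mul_nonneg hβ.le (sub_nonneg.2 h1)]
    _ ≤ ∫⁻ x, ENNReal.ofReal ((exp (-(3 * β * E / 4)) / Z) * rexp (-(β/4) * ‖x‖^2)) :=
        setLIntegral_le_lintegral _ _
    _ = ENNReal.ofReal ((exp (-(3 * β * E / 4)) / Z) * G) := by
        rw [← ofReal_integral_eq_lintegral_ofReal (hint.const_mul _)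
          (Eventually.of_forall fun x => by positivity), integral_const_mul]
    _ ≤ ENNReal.ofReal (exp (-β * E / 2)) := by
        refine ENNReal.ofReal_le_ofReal ?_
        have h3 : G / Z ≤ exp (β * E / 4) := by
          rw [div_lt_iff₀ hβ] at hE2
          linarith [Real.add_one_le_exp (β * E / 4)]
        calc exp (-(3 * β * E / 4)) / Z * G = exp (-(3 * β * E / 4)) * (G / Z) := by ring
          _ ≤ exp (-(3 * β * E / 4)) * exp (β * E / 4) :=
              mul_le_mul_of_nonneg_left h3 (exp_pos _).le
          _ = exp (-β * E / 2) := by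
              rw [← Real.exp_add]
              congr 1
              ring

end
end

section
/- (Local Lipschitz continuity of the forward Euler kernel in total variation.) Let U : ℝ^n → ℝ be C¹. For every stepsize h > 0 and all x, y ∈ ℝ^n, the forward Euler transition kernels satisfy ‖P̃_h(x,·) − P̃_h(y,·)‖_TV ≤ |x − y| / √(2β⁻¹h) + √(h/(2β⁻¹))·|∇U(x) − ∇U(y)|. -/
open MeasureTheory Real Filter
open scoped ENNReal

noncomputable section

/-- Gaussian density with covariance `t/2 · I`. -/
def gdens (n : ℕ) (t : ℝ) (m z : Euc n) : ℝ :=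
  (π * t) ^ (-(n : ℝ) / 2) * exp (-‖z - m‖ ^ 2 / t)

lemma gdens_pos (n : ℕ) {t : ℝ} (ht : 0 < t) (m z : Euc n) : 0 < gdens n t m z := by
  unfold gdens; positivity

lemma gdens_integral (n : ℕ) {t : ℝ} (ht : 0 < t) (m : Euc n) :
    ∫ z, gdens n t m z = 1 := by
  unfold gdens
  rw [integral_const_mul,
    integral_sub_right_eq_self (fun z : Euc n => exp (-‖z‖ ^ 2 / t)) m]
  have h1 := GaussianFourier.integral_rexp_neg_mul_sq_norm (V := Euc n) (b := t⁻¹) (by positivity)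
  have h2 : (fun z : Euc n => exp (-‖z‖ ^ 2 / t)) = fun z => exp (-t⁻¹ * ‖z‖ ^ 2) := by
    funext z; congr 1; field_simp
  rw [h2, h1, finrank_euclideanSpace_fin, div_inv_eq_mul,
    ← Real.rpow_add (by positivity)]
  rw [neg_div, neg_add_cancel, Real.rpow_zero]

lemma gdens_integrable (n : ℕ) {t : ℝ} (ht : 0 < t) (m : Euc n) :
    Integrable (gdens n t m) := by
  by_contra hc
  have h := gdens_integral n ht m
  rw [integral_undef hc] at h
  exact zero_ne_one h

lemma sqrt_mul_gdens (n : ℕ) {t : ℝ} (ht : 0 < t) (a b z : Euc n) :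
    √(gdens n t a z) * √(gdens n t b z)
      = exp (-‖a - b‖ ^ 2 / (4 * t)) * gdens n t ((2:ℝ)⁻¹ • (a + b)) z := by
  rw [← Real.sqrt_mul (gdens_pos n ht a z).le]
  rw [Real.sqrt_eq_iff_mul_self_eq (mul_pos (gdens_pos n ht a z) (gdens_pos n ht b z)).le
    (mul_pos (exp_pos _) (gdens_pos n ht _ z)).le]
  have hp := parallelogram_law_with_norm ℝ (z - a) (z - b)
  have e1 : z - a + (z - b) = (2:ℝ) • (z - (2:ℝ)⁻¹ • (a + b)) := by
    module
  have e2 : z - a - (z - b) = b - a := by abel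
  rw [e1, e2, norm_smul, norm_sub_rev b a, Real.norm_two] at hp
  unfold gdens
  have : exp (-‖a - b‖ ^ 2 / (4 * t)) * exp (-‖a - b‖ ^ 2 / (4 * t)) *
      (exp (-‖z - (2:ℝ)⁻¹ • (a + b)‖ ^ 2 / t) * exp (-‖z - (2:ℝ)⁻¹ • (a + b)‖ ^ 2 / t))
      = exp (-‖z - a‖ ^ 2 / t) * exp (-‖z - b‖ ^ 2 / t) := by
    rw [← exp_add, ← exp_add, ← exp_add, ← exp_add]
    congr 1
    field_simp
    linarith
  linear_combination -((π * t) ^ (-(n : ℝ) / 2)) ^ 2 * this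

lemma gdens_l1 (n : ℕ) {t : ℝ} (ht : 0 < t) (a b : Euc n) :
    (∫ z, |gdens n t a z - gdens n t b z|) ^ 2 ≤ 2 * ‖a - b‖ ^ 2 / t := by
  set S := ∫ z, |gdens n t a z - gdens n t b z| with hS
  set B := exp (-‖a - b‖ ^ 2 / (4 * t)) with hB
  set m := (2:ℝ)⁻¹ • (a + b) with hm
  have ia := gdens_integrable n ht a
  have ib := gdens_integrable n ht b
  have im := gdens_integrable n ht m
  have key : ∀ c : ℝ, 0 ≤ (1 - B) * (c * c) + (-S) * c + (1 + B) := by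
    intro c
    have hle : ∫ z, c * |gdens n t a z - gdens n t b z| ≤
        ∫ z, ((c ^ 2 + 1) / 2 * gdens n t a z + (c ^ 2 + 1) / 2 * gdens n t b z
          + (1 - c ^ 2) * B * gdens n t m z) := by
      apply integral_mono ((ia.sub ib).abs.const_mul c)
        (((ia.const_mul _).add (ib.const_mul _)).add (im.const_mul _))
      intro z
      have hs := sqrt_mul_gdens n ht a b z
      have h1 := Real.sq_sqrt (gdens_pos n ht a z).le
      have h2 := Real.sq_sqrt (gdens_pos n ht b z).le
      rw [← hB, ← hm] at hs
      simp only [Pi.add_apply, Pi.sub_apply]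
      rw [mul_assoc (1 - c ^ 2), ← hs, ← h1, ← h2]
      set u := √(gdens n t a z)
      set v := √(gdens n t b z)
      have hu : 0 ≤ u := Real.sqrt_nonneg _
      have hv : 0 ≤ v := Real.sqrt_nonneg _
      simp only [Real.sqrt_sq hu, Real.sqrt_sq hv]
      have e : |u ^ 2 - v ^ 2| = |u - v| * (u + v) := by
        rw [← abs_of_nonneg (add_nonneg hu hv), ← abs_mul]
        congr 1; ring
      rw [e]
      have e3 := sq_abs (u - v)
      nlinarith [sq_nonneg (c * |u - v| - (u + v))]
    rw [integral_const_mul, integral_add, integral_add, integral_const_mul, integral_const_mul,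
      integral_const_mul, gdens_integral n ht, gdens_integral n ht, gdens_integral n ht,
      ← hS] at hle
    · nlinarith
    · exact ia.const_mul _
    · exact ib.const_mul _
    · exact (ia.const_mul _).add (ib.const_mul _)
    · exact im.const_mul _
  have hd := discrim_le_zero key
  unfold discrim at hd
  have hBB : B * B = exp (-(‖a - b‖ ^ 2 / (2 * t))) := by
    rw [hB, ← exp_add]; congr 1; field_simp; ring
  have hexp := Real.add_one_le_exp (-(‖a - b‖ ^ 2 / (2 * t)))
  have e : 2 * ‖a - b‖ ^ 2 / t = 4 * (‖a - b‖ ^ 2 / (2 * t)) := by field_simp; ring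
  rw [e]
  nlinarith

lemma gdens_set (n : ℕ) {t : ℝ} (ht : 0 < t) (a b : Euc n) (A : Set (Euc n))
    (hA : MeasurableSet A) :
    |(volume.withDensity (fun z => ENNReal.ofReal (gdens n t a z)) A).toReal
      - (volume.withDensity (fun z => ENNReal.ofReal (gdens n t b z)) A).toReal|
      ≤ (∫ z, |gdens n t a z - gdens n t b z|) / 2 := by
  have ia := gdens_integrable n ht a
  have ib := gdens_integrable n ht b
  have hval : ∀ c : Euc n,
      (volume.withDensity (fun z => ENNReal.ofReal (gdens n t c z)) A).toReal
        = ∫ z in A, gdens n t c z := by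
    intro c
    rw [withDensity_apply _ hA, integral_eq_lintegral_of_nonneg_ae
      (Eventually.of_forall fun z => (gdens_pos n ht c z).le)
      (gdens_integrable n ht c).integrableOn.aestronglyMeasurable]
  rw [hval, hval, ← integral_sub ia.integrableOn ib.integrableOn]
  have h0 := integral_add_compl hA (ia.sub ib)
  have h1 := integral_add_compl hA (ia.sub ib).abs
  simp only [Pi.sub_apply] at h0 h1
  rw [integral_sub ia ib, gdens_integral n ht, gdens_integral n ht] at h0
  have h2 := abs_integral_le_integral_abs (μ := volume.restrict A)
    (f := fun z => gdens n t a z - gdens n t b z)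
  have h3 := abs_integral_le_integral_abs (μ := volume.restrict Aᶜ)
    (f := fun z => gdens n t a z - gdens n t b z)
  have h4 : |∫ z in Aᶜ, gdens n t a z - gdens n t b z|
      = |∫ z in A, gdens n t a z - gdens n t b z| := by
    rw [← abs_neg]; congr 1; linarith
  linarith

/-- Local Lipschitz continuity of the forward Euler kernel in total variation. -/
theorem euler_kernel_tv_lipschitz (n : ℕ) (β : ℝ) (hβ : 0 < β)
    (U : Euc n → ℝ) (hU : ContDiff ℝ 1 U) (h : ℝ) (hh : 0 < h) (x y : Euc n) :
    tvDist (eulerKernel n β h U x) (eulerKernel n β h U y)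
      ≤ ‖x - y‖ / Real.sqrt (2 * β⁻¹ * h)
        + Real.sqrt (h / (2 * β⁻¹)) * ‖gradient U x - gradient U y‖ := by
  have ht : 0 < 4 * β⁻¹ * h := by positivity
  set t := 4 * β⁻¹ * h with htd
  set s := 2 * β⁻¹ * h with hsd
  have hs : 0 < s := by positivity
  have hk : ∀ w : Euc n, eulerKernel n β h U w =
      volume.withDensity (fun z => ENNReal.ofReal (gdens n t (w - h • gradient U w) z)) := by
    intro w
    unfold eulerKernel
    congr 1
    funext z
    unfold eulerDensity gdens
    rw [← htd, show 4 * π * β⁻¹ * h = π * t by rw [htd]; ring,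
      show z - w + h • gradient U w = z - (w - h • gradient U w) by abel]
  rw [hk, hk]
  set a := x - h • gradient U x with ha
  set b := y - h • gradient U y with hb
  have hL := gdens_l1 n ht a b
  have hS : ∫ z, |gdens n t a z - gdens n t b z| ≤ ‖a - b‖ / √s := by
    apply le_of_sq_le_sq _ (by positivity)
    rw [div_pow, Real.sq_sqrt hs.le]
    refine hL.trans (le_of_eq ?_)
    rw [htd, hsd]; field_simp; ring
  have htv : tvDist (volume.withDensity (fun z => ENNReal.ofReal (gdens n t a z)))
      (volume.withDensity (fun z => ENNReal.ofReal (gdens n t b z))) ≤ ‖a - b‖ / √s := by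
    unfold tvDist
    haveI : Nonempty {A : Set (Euc n) // MeasurableSet A} := ⟨⟨∅, MeasurableSet.empty⟩⟩
    have := ciSup_le (fun A : {A : Set (Euc n) // MeasurableSet A} =>
      gdens_set n ht a b A.1 A.2)
    linarith
  refine htv.trans ?_
  have hn : ‖a - b‖ ≤ ‖x - y‖ + h * ‖gradient U x - gradient U y‖ := by
    have : a - b = (x - y) - h • (gradient U x - gradient U y) := by
      rw [ha, hb, smul_sub]; abel
    rw [this]
    refine (norm_sub_le _ _).trans ?_
    rw [norm_smul, Real.norm_of_nonneg hh.le]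
  have hc : √(h / (2 * β⁻¹)) = h / √s := by
    rw [show h / (2 * β⁻¹) = h ^ 2 / s by rw [hsd]; field_simp,
      Real.sqrt_div (by positivity), Real.sqrt_sq hh.le]
  rw [hc]
  calc ‖a - b‖ / √s ≤ (‖x - y‖ + h * ‖gradient U x - gradient U y‖) / √s := by gcongr
    _ = _ := by ring

end
end

section
/- (Average rejection probability of MALA.) Let U satisfy Assumption 1. For every p ∈ ℕ there exist h_c > 0 and C > 0 such that for every stepsize h < h_c and every x ∈ ℝ^n with U(x) < h^{−1/2}, the expectation over a standard Gaussian random vector ξ ∼ N(0, I) on ℝ^n satisfies E[ |1 − α_h(x, x − h∇U(x) + √(2β⁻¹h)·ξ)|^p ] ≤ C·U(x)^{2p}·h^{3p/2}. -/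
open MeasureTheory Real Filter
open scoped ENNReal

noncomputable section

lemma line_hasDerivAt {n : ℕ} (U : Euc n → ℝ) (hU : ContDiff ℝ 4 U) (x v : Euc n) (k : ℕ)
    (hk : k < 4) (t : ℝ) :
    HasDerivAt (fun t : ℝ => iteratedFDeriv ℝ k U (x + t • v) (fun _ => v))
      (iteratedFDeriv ℝ (k+1) U (x + t • v) (fun _ => v)) t := by
  have h1 : DifferentiableAt ℝ (iteratedFDeriv ℝ k U) (x + t • v) :=
    (hU.differentiable_iteratedFDeriv (by exact_mod_cast hk)) _
  have h2 : HasDerivAt (fun t : ℝ => x + t • v) v t := by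
    simpa using ((hasDerivAt_id t).smul_const v).const_add x
  have h3 := h1.hasFDerivAt.comp_hasDerivAt t h2
  have h4 := ((ContinuousMultilinearMap.apply ℝ (fun _ : Fin k => Euc n) ℝ
    (fun _ => v)).hasFDerivAt).comp_hasDerivAt t h3
  rw [iteratedFDeriv_succ_apply_left]
  exact h4

lemma trapezoid {n : ℕ} (U : Euc n → ℝ) (hU : ContDiff ℝ 4 U) (x v : Euc n) (M : ℝ)
    (hM : ∀ t ∈ Set.Icc (0:ℝ) 1, ‖iteratedFDeriv ℝ 3 U (x + t • v)‖ ≤ M) :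
    |U (x + v) - U x - (1/2) * (inner ℝ (gradient U x) v + inner ℝ (gradient U (x+v)) v)|
      ≤ M * ‖v‖^3 / 2 := by
  set f : ℕ → ℝ → ℝ := fun k t => iteratedFDeriv ℝ k U (x + t • v) (fun _ => v) with hf
  have hd : ∀ k, k < 4 → ∀ t, HasDerivAt (f k) (f (k+1) t) t :=
    fun k hk t => line_hasDerivAt U hU x v k hk t
  have hf0 : ∀ t, f 0 t = U (x + t • v) := fun t => by simp [hf]
  have hg : ∀ y, inner ℝ (gradient U y) v = fderiv ℝ U y v := fun y => by
    simp [gradient]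
  have hf1 : ∀ t, f 1 t = inner ℝ (gradient U (x + t • v)) v := fun t => by
    rw [hg]; simp only [hf]; rw [iteratedFDeriv_one_apply]
  have hf3 : ∀ t ∈ Set.Icc (0:ℝ) 1, |f 3 t| ≤ M * ‖v‖^3 := fun t ht => by
    have := (iteratedFDeriv ℝ 3 U (x + t • v)).le_opNorm (fun _ => v)
    simp only [Finset.prod_const, Finset.card_univ, Fintype.card_fin, Real.norm_eq_abs] at this
    exact this.trans (by gcongr; exact hM t ht)
  have hB : 0 ≤ M * ‖v‖^3 := (abs_nonneg _).trans (hf3 0 (by simp))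
  have hψ : ∀ t, HasDerivAt (fun t => f 1 t / 2 - f 1 0 / 2 - t / 2 * f 2 t)
      (-(t/2) * f 3 t) t := fun t => by
    have := (((hd 1 (by norm_num) t).div_const 2).sub_const (f 1 0 / 2)).sub
      (((hasDerivAt_id t).div_const 2).mul (hd 2 (by norm_num) t))
    refine this.congr_deriv ?_
    simp only [id]; ring
  have hφ : ∀ t, HasDerivAt (fun t => f 0 t - f 0 0 - t / 2 * (f 1 0 + f 1 t))
      (f 1 t / 2 - f 1 0 / 2 - t / 2 * f 2 t) t := fun t => by
    have := ((hd 0 (by norm_num) t).sub_const (f 0 0)).sub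
      (((hasDerivAt_id t).div_const 2).mul ((hd 1 (by norm_num) t).const_add (f 1 0)))
    refine this.congr_deriv ?_
    simp only [id]; ring
  have hψb : ∀ t ∈ Set.Icc (0:ℝ) 1,
      |f 1 t / 2 - f 1 0 / 2 - t / 2 * f 2 t| ≤ M * ‖v‖^3 / 2 := fun t ht => by
    have := norm_image_sub_le_of_norm_deriv_le_segment' (a := 0) (b := 1)
      (C := M * ‖v‖^3 / 2) (fun t _ => (hψ t).hasDerivWithinAt) (fun s hs => by
        rw [Real.norm_eq_abs, abs_mul, abs_neg, abs_of_nonneg (by linarith [hs.1] : 0 ≤ s/2)]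
        nlinarith [hf3 s ⟨hs.1, hs.2.le⟩, abs_nonneg (f 3 s), hs.1, hs.2]) t ht
    simp only [Real.norm_eq_abs] at this
    have e : f 1 t / 2 - f 1 0 / 2 - t / 2 * f 2 t - (f 1 0 / 2 - f 1 0 / 2 - 0 / 2 * f 2 0)
      = f 1 t / 2 - f 1 0 / 2 - t / 2 * f 2 t := by ring
    rw [e] at this
    refine this.trans ?_
    nlinarith [ht.1, ht.2]
  have := norm_image_sub_le_of_norm_deriv_le_segment' (a := 0) (b := 1)
      (C := M * ‖v‖^3 / 2) (fun t _ => (hφ t).hasDerivWithinAt)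
      (fun s hs => hψb s ⟨hs.1, hs.2.le⟩) 1 (by simp)
  simp only [Real.norm_eq_abs] at this
  rw [hf0, hf0, hf1, hf1] at this
  simp only [zero_smul, one_smul, add_zero] at this
  convert this using 1
  · congr 1; ring
  · ring

lemma growth {n : ℕ} (U : Euc n → ℝ) (hU : ContDiff ℝ 4 U) (h1 : ∀ x, 1 ≤ U x) (C : ℝ)
    (hg : ∀ x, ‖gradient U x‖ ≤ C * U x) (x w : Euc n) :
    U (x + w) ≤ U x * exp (C * ‖w‖) := by
  have hpos : ∀ y, 0 < U y := fun y => lt_of_lt_of_le one_pos (h1 y)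
  have hdiff : Differentiable ℝ U := hU.differentiable (by norm_num)
  have key := Convex.norm_image_sub_le_of_norm_hasFDerivWithin_le (𝕜 := ℝ)
    (f := fun y => Real.log (U y)) (f' := fun y => (U y)⁻¹ • fderiv ℝ U y) (s := Set.univ)
    (C := C) (x := x) (y := x + w)
    (fun y _ => ((hdiff y).hasFDerivAt.log (hpos y).ne').hasFDerivWithinAt)
    (fun y _ => by
      have e : ‖fderiv ℝ U y‖ = ‖gradient U y‖ := by simp [gradient]
      rw [norm_smul, e, norm_inv, Real.norm_eq_abs, abs_of_pos (hpos y),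
        inv_mul_le_iff₀ (hpos y)]
      linarith [hg y]) convex_univ trivial trivial
  rw [add_sub_cancel_left] at key
  have k2 := (le_abs_self _).trans key
  rw [← Real.exp_log (hpos (x+w))]
  calc exp (Real.log (U (x+w))) ≤ exp (Real.log (U x) + C * ‖w‖) := by
        apply exp_le_exp.2; linarith
    _ = _ := by rw [exp_add, Real.exp_log (hpos x)]

lemma grad_lip {n : ℕ} (U : Euc n → ℝ) (hU : ContDiff ℝ 4 U) (x v : Euc n) (M : ℝ)
    (hM : ∀ t ∈ Set.Icc (0:ℝ) 1, ‖iteratedFDeriv ℝ 2 U (x + t • v)‖ ≤ M) :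
    ‖gradient U (x + v) - gradient U x‖ ≤ M * ‖v‖ := by
  have e : ‖gradient U (x + v) - gradient U x‖ = ‖fderiv ℝ U (x+v) - fderiv ℝ U x‖ := by
    simp only [gradient]
    rw [← map_sub, LinearIsometryEquiv.norm_map]
  rw [e]
  have hd : Differentiable ℝ (fderiv ℝ U) :=
    (hU.fderiv_right (m := 3) (by norm_num)).differentiable (by norm_num)
  have := Convex.norm_image_sub_le_of_norm_fderiv_le (𝕜 := ℝ) (f := fderiv ℝ U)
    (s := segment ℝ x (x+v)) (C := M) (x := x) (y := x + v) (fun y _ => hd y) (fun y hy => by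
      rw [segment_eq_image'] at hy
      obtain ⟨t, ht, rfl⟩ := hy
      simp only [add_sub_cancel_left]
      rw [← norm_iteratedFDeriv_one, norm_iteratedFDeriv_fderiv]
      exact hM t ht) (convex_segment _ _) (left_mem_segment _ _ _) (right_mem_segment _ _ _)
  simpa using this

lemma accept_bound {n : ℕ} (β h : ℝ) (hβ : 0 < β) (hh : 0 < h) (U : Euc n → ℝ) (x v : Euc n) :
    |1 - accept n β h U x (x + v)| ≤
      β * (|U (x + v) - U x - (1/2) * (inner ℝ (gradient U x) v + inner ℝ (gradient U (x+v)) v)|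
      + h / 4 * |‖gradient U (x+v)‖^2 - ‖gradient U x‖^2|) := by
  set G : ℝ := -β * ((U (x + v) - U x
      - (1/2) * (inner ℝ (gradient U x) v + inner ℝ (gradient U (x+v)) v))
      + h / 4 * (‖gradient U (x+v)‖^2 - ‖gradient U x‖^2)) with hG
  have e : accept n β h U x (x+v) = min 1 (exp G) := by
    unfold accept eulerDensity
    congr 1
    have hc : (0:ℝ) < (4 * π * β⁻¹ * h) ^ (-(n : ℝ) / 2) := by positivity
    set K := (4 * π * β⁻¹ * h) ^ (-(n : ℝ) / 2) with hK
    rw [mul_assoc K, mul_assoc K, mul_div_mul_left _ _ hc.ne', ← exp_add, ← exp_add, ← exp_sub]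
    congr 1
    have e1 : x - (x + v) + h • gradient U (x+v) = h • gradient U (x+v) - v := by abel
    have e2 : x + v - x + h • gradient U x = h • gradient U x + v := by abel
    rw [e1, e2, norm_sub_sq_real, norm_add_sq_real, norm_smul, norm_smul, inner_smul_left,
      inner_smul_left, Real.norm_eq_abs, mul_pow, mul_pow, sq_abs, hG]
    simp only [conj_trivial]
    field_simp
    ring
  have hb : |1 - min 1 (exp G)| ≤ |G| := by
    rcases le_total 1 (exp G) with h1 | h1
    · rw [min_eq_left h1]; simp
    · rw [min_eq_right h1, abs_of_nonneg (by linarith)]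
      linarith [add_one_le_exp G, neg_abs_le G]
  rw [e]
  refine hb.trans ?_
  rw [hG, abs_mul, abs_neg, abs_of_pos hβ]
  gcongr
  refine (abs_add_le _ _).trans ?_
  rw [abs_mul (h/4), abs_of_pos (by positivity : 0 < h/4)]

lemma integrable_gauss (n : ℕ) (b : ℝ) :
    Integrable (fun ξ : Euc n => exp (b * ‖ξ‖)) (stdGaussian n) := by
  unfold stdGaussian
  rw [integrable_withDensity_iff (by fun_prop) (by simp)]
  have h1 : Integrable (fun ξ : Euc n => exp (-(1/4) * ‖ξ‖^2)) volume := by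
    have := (GaussianFourier.integrable_cexp_neg_mul_sq_norm_add (V := Euc n)
      (b := (1/4 : ℂ)) (by norm_num) 0 0).norm
    simpa [Complex.norm_exp, ← Complex.ofReal_pow] using this
  refine (h1.const_mul (exp (b^2) * (2*π) ^ (-(n : ℝ) / 2))).mono' (by fun_prop) ?_
  refine Eventually.of_forall fun ξ => ?_
  rw [ENNReal.toReal_ofReal (by positivity), Real.norm_eq_abs, abs_of_nonneg (by positivity)]
  have : exp (b * ‖ξ‖) * exp (-‖ξ‖^2/2) ≤ exp (b^2) * exp (-(1/4) * ‖ξ‖^2) := by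
    rw [← exp_add, ← exp_add]
    apply exp_le_exp.2
    nlinarith [sq_nonneg (b - ‖ξ‖/2)]
  calc _ = (2*π) ^ (-(n : ℝ) / 2) * (exp (b * ‖ξ‖) * exp (-‖ξ‖^2/2)) := by ring
    _ ≤ (2*π) ^ (-(n : ℝ) / 2) * (exp (b^2) * exp (-(1/4) * ‖ξ‖^2)) := by gcongr
    _ = _ := by ring

lemma pointwise_bound {n : ℕ} (β : ℝ) (hβ : 0 < β) (U : Euc n → ℝ) (hU : ContDiff ℝ 4 U)
    (h1 : ∀ x, 1 ≤ U x) (C : ℝ) (hC : 0 < C)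
    (hg : ∀ x, ‖gradient U x‖ ≤ C * U x) (h2 : ∀ x, ‖iteratedFDeriv ℝ 2 U x‖ ≤ C * U x)
    (h3 : ∀ x, ‖iteratedFDeriv ℝ 3 U x‖ ≤ C * U x) (s L : ℝ) (hs : 0 < s) (hs1 : s < 1)
    (hL : 0 ≤ L) (x v : Euc n) (hv : ‖v‖ ≤ s * L) :
    |1 - accept n β (s^2) U x (x + v)| ≤
      U x ^ 2 * s^3 * (β * (C + C^2) * exp ((2*C+3) * L)) := by
  have hA := h1 x
  have hvL : ‖v‖ ≤ L := hv.trans (by nlinarith)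
  set M := U x * exp (C * L) with hMdef
  have hM0 : 0 < M := by positivity
  have hseg : ∀ t ∈ Set.Icc (0:ℝ) 1, U (x + t • v) ≤ M := fun t ht => by
    refine (growth U hU h1 C hg x (t • v)).trans ?_
    have : ‖t • v‖ ≤ L := by
      rw [norm_smul, Real.norm_eq_abs, abs_of_nonneg ht.1]
      nlinarith [norm_nonneg v, ht.1, ht.2]
    rw [hMdef]
    gcongr
  have hx : U x ≤ M := by simpa using hseg 0 (by simp)
  have hy : U (x + v) ≤ M := by simpa using hseg 1 (by simp)
  have t1 := trapezoid U hU x v (C * M) (fun t ht => (h3 _).trans (by gcongr; exact hseg t ht))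
  have t2 := grad_lip U hU x v (C * M) (fun t ht => (h2 _).trans (by gcongr; exact hseg t ht))
  have gx : ‖gradient U x‖ ≤ C * M := (hg x).trans (by gcongr)
  have gy : ‖gradient U (x+v)‖ ≤ C * M := (hg _).trans (by gcongr)
  have t3 : |‖gradient U (x+v)‖^2 - ‖gradient U x‖^2| ≤ (C * M * ‖v‖) * (2 * (C * M)) := by
    rw [sq_sub_sq, abs_mul, mul_comm]
    refine mul_le_mul ((abs_norm_sub_norm_le _ _).trans t2) ?_ (abs_nonneg _) (by positivity)
    rw [abs_of_nonneg (by positivity)]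
    linarith
  refine (accept_bound β (s^2) hβ (by positivity) U x v).trans ?_
  have hL1 : L ≤ exp L := by linarith [add_one_le_exp L]
  have hE1 : 1 ≤ exp L := one_le_exp hL
  have hF1 : 1 ≤ exp (C * L) := one_le_exp (by positivity)
  have eE : exp ((2*C+3) * L) = exp (C*L)^2 * exp L ^ 3 := by
    rw [← exp_nat_mul, ← exp_nat_mul, ← exp_add]; congr 1; push_cast; ring
  rw [eE]
  have hLE : L ≤ exp L ^ 3 := hL1.trans (le_self_pow₀ hE1 (by norm_num))
  have hL3 : L^3 ≤ exp L ^ 3 := by gcongr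
  have a1 : C * M * ‖v‖^3 / 2 ≤ U x ^2 * s^3 * C * (exp (C*L)^2 * exp L ^ 3) := by
    have q1 : ‖v‖^3 ≤ s^3 * exp L ^ 3 := by
      calc ‖v‖^3 ≤ (s * L)^3 := by gcongr
        _ = s^3 * L^3 := by ring
        _ ≤ _ := by gcongr
    have q2 : M ≤ U x ^2 * exp (C*L)^2 := by
      rw [hMdef]
      gcongr <;> exact le_self_pow₀ (by assumption) (by norm_num)
    calc C * M * ‖v‖^3 / 2 ≤ C * M * ‖v‖^3 := by
          have : 0 ≤ C * M * ‖v‖^3 := by positivity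
          linarith
      _ ≤ C * (U x ^2 * exp (C*L)^2) * (s^3 * exp L ^ 3) := by gcongr
      _ = _ := by ring
  have a2 : s^2/4 * ((C * M * ‖v‖) * (2 * (C * M))) ≤
      U x ^2 * s^3 * C^2 * (exp (C*L)^2 * exp L ^ 3) := by
    have q1 : ‖v‖ ≤ s * exp L ^ 3 := hv.trans (by gcongr)
    calc s^2/4 * ((C * M * ‖v‖) * (2 * (C * M))) = (s^2 * C^2 * M^2 * ‖v‖) / 2 := by ring
      _ ≤ s^2 * C^2 * M^2 * ‖v‖ := by
          have : 0 ≤ s^2 * C^2 * M^2 * ‖v‖ := by positivity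
          linarith
      _ ≤ s^2 * C^2 * M^2 * (s * exp L ^ 3) := by gcongr
      _ = _ := by rw [hMdef]; ring
  calc _ ≤ β * (C * M * ‖v‖^3 / 2 + s^2/4 * ((C * M * ‖v‖) * (2 * (C * M)))) := by gcongr
    _ ≤ β * (U x ^2 * s^3 * C * (exp (C*L)^2 * exp L ^ 3)
        + U x ^2 * s^3 * C^2 * (exp (C*L)^2 * exp L ^ 3)) := by gcongr
    _ = _ := by ring

/-- Average rejection probability of MALA. -/
theorem mala_rejection_probability (n : ℕ) (β : ℝ) (hβ : 0 < β)
    (U : Euc n → ℝ) (hU : Assumption1 n β U) (p : ℕ) :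
    ∃ hc > (0:ℝ), ∃ C > (0:ℝ), ∀ h : ℝ, 0 < h → h < hc →
      ∀ x : Euc n, U x < h ^ (-(1:ℝ)/2) →
        (∫ ξ, |1 - accept n β h U x
            (x - h • gradient U x + Real.sqrt (2 * β⁻¹ * h) • ξ)| ^ p ∂(stdGaussian n))
          ≤ C * U x ^ (2 * p) * h ^ ((3 * (p:ℝ)) / 2) := by
  obtain ⟨C, hC, hD⟩ := hU.deriv_bound
  have hg : ∀ x, ‖gradient U x‖ ≤ C * U x := fun x => le_sup_right.trans (hD x)
  have h2 : ∀ x, ‖iteratedFDeriv ℝ 2 U x‖ ≤ C * U x :=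
    fun x => (le_sup_right.trans le_sup_left).trans (hD x)
  have h3 : ∀ x, ‖iteratedFDeriv ℝ 3 U x‖ ≤ C * U x :=
    fun x => ((le_sup_right.trans le_sup_left).trans le_sup_left).trans (hD x)
  set b := Real.sqrt (2 * β⁻¹) with hb
  have hb0 : 0 ≤ b := Real.sqrt_nonneg _
  set F : Euc n → ℝ := fun ξ => (β * (C + C^2) * exp ((2*C+3) * (C + b * ‖ξ‖))) ^ p with hF
  have hFi : Integrable F (stdGaussian n) := by
    have := (integrable_gauss n (p * ((2*C+3) * b))).const_mul
      ((β * (C + C^2)) ^ p * exp (p * ((2*C+3) * C)))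
    convert this using 2 with ξ
    simp only [hF]
    rw [mul_pow, ← exp_nat_mul, mul_assoc, ← exp_add]
    congr 2
    ring
  have hF0 : ∀ ξ, 0 ≤ F ξ := fun ξ => by simp only [hF]; positivity
  refine ⟨1, one_pos, (∫ ξ, F ξ ∂(stdGaussian n)) + 1, ?_, ?_⟩
  · have : 0 ≤ ∫ ξ, F ξ ∂(stdGaussian n) := integral_nonneg (fun ξ => hF0 ξ)
    linarith
  intro h hh hh1 x hx
  obtain ⟨s, hs, rfl⟩ : ∃ s : ℝ, 0 < s ∧ h = s^2 :=
    ⟨Real.sqrt h, Real.sqrt_pos.2 hh, (Real.sq_sqrt hh.le).symm⟩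
  have hs1 : s < 1 := by nlinarith
  have e1 : (s^2) ^ (-(1:ℝ)/2) = s⁻¹ := by
    rw [← Real.rpow_natCast s 2, ← Real.rpow_mul hs.le, ← Real.rpow_neg_one]
    congr 1; norm_num
  have e2 : (s^2) ^ ((3 * (p:ℝ)) / 2) = (s^3)^p := by
    rw [← pow_mul, ← Real.rpow_natCast s 2, ← Real.rpow_mul hs.le, ← Real.rpow_natCast s (3*p)]
    congr 1; push_cast; ring
  rw [e1] at hx
  have hA := hU.one_le x
  have hAs : s * U x ≤ 1 := by
    have := mul_lt_mul_of_pos_left hx hs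
    rw [mul_inv_cancel₀ hs.ne'] at this
    exact this.le
  rw [e2]
  have e3 : Real.sqrt (2 * β⁻¹ * s^2) = b * s := by
    rw [Real.sqrt_mul (by positivity), Real.sqrt_sq hs.le]
  rw [e3]
  have key : ∀ ξ : Euc n, |1 - accept n β (s^2) U x
      (x - (s^2) • gradient U x + (b * s) • ξ)| ^ p ≤ (U x ^ (2 * p) * (s^3)^p) * F ξ := by
    intro ξ
    have hv : ‖-((s^2) • gradient U x) + (b * s) • ξ‖ ≤ s * (C + b * ‖ξ‖) := by
      refine (norm_add_le _ _).trans ?_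
      rw [norm_neg, norm_smul, norm_smul, Real.norm_eq_abs, Real.norm_eq_abs,
        abs_of_nonneg (by positivity : 0 ≤ s^2), abs_of_nonneg (by positivity : 0 ≤ b * s)]
      have : s^2 * ‖gradient U x‖ ≤ s * C := by
        calc s^2 * ‖gradient U x‖ ≤ s^2 * (C * U x) := by gcongr; exact hg x
          _ = s * C * (s * U x) := by ring
          _ ≤ s * C * 1 := by gcongr
          _ = s * C := by ring
      linarith
    have := pointwise_bound β hβ U hU.smooth hU.one_le C hC hg h2 h3 s (C + b * ‖ξ‖) hs hs1
      (by positivity) x _ hv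
    rw [show x - (s^2) • gradient U x + (b * s) • ξ
      = x + (-((s^2) • gradient U x) + (b * s) • ξ) by abel]
    refine (pow_le_pow_left₀ (abs_nonneg _) this p).trans (le_of_eq ?_)
    simp only [hF]
    rw [mul_pow, mul_pow, ← pow_mul]
  calc _ ≤ ∫ ξ, (U x ^ (2 * p) * (s^3)^p) * F ξ ∂(stdGaussian n) := by
        refine integral_mono_of_nonneg (Eventually.of_forall fun ξ => by positivity)
          (hFi.const_mul _) (Eventually.of_forall key)
    _ = (∫ ξ, F ξ ∂(stdGaussian n)) * (U x ^ (2 * p) * (s^3)^p) := by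
        rw [integral_const_mul, mul_comm]
    _ ≤ ((∫ ξ, F ξ ∂(stdGaussian n)) + 1) * (U x ^ (2 * p) * (s^3)^p) := by
        gcongr; linarith
    _ = _ := by ring

end
end

section
/- (Local drift condition for MALA.) Let U satisfy Assumption 1. Then there exist θ ∈ (0, β−c) and positive constants C, γ, K such that for every stepsize h ∈ (0,1) and every x ∈ ℝ^n with U(x) < h^{−1/2}, one step of MALA satisfies (P_h Φ_θ)(x) ≤ (e^{−γh} + C·U(x)⁴·h²)·Φ_θ(x) + (K/γ)·(1 − e^{−γh}), where (P_h Φ_θ)(x) = ∫_{ℝ^n} α_h(x,y)q_h(x,y)Φ_θ(y)dy + (1 − ∫_{ℝ^n} α_h(x,y)q_h(x,y)dy)·Φ_θ(x). In particular this quantity is finite. -/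
open MeasureTheory Real Filter
open scoped ENNReal

noncomputable section

/-- One-step comparison: `f 0 ≤ 0` and `f' ≤ 0` on `[0,1]` give `f ≤ 0` on `[0,1]`. -/
lemma aux_nonpos {f f' : ℝ → ℝ} (hf : ∀ t, HasDerivAt f (f' t) t) (h0 : f 0 ≤ 0)
    (h' : ∀ t ∈ Set.Icc (0:ℝ) 1, f' t ≤ 0) : ∀ t ∈ Set.Icc (0:ℝ) 1, f t ≤ 0 := by
  intro t ht
  have hanti : AntitoneOn f (Set.Icc (0:ℝ) 1) := by
    apply antitoneOn_of_deriv_nonpos (convex_Icc 0 1)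
    · exact fun x _ => (hf x).continuousAt.continuousWithinAt
    · exact fun x _ => (hf x).differentiableAt.differentiableWithinAt
    · intro x hx
      rw [interior_Icc] at hx
      rw [(hf x).deriv]
      exact h' x ⟨hx.1.le, hx.2.le⟩
  exact (hanti ⟨le_rfl, zero_le_one⟩ ht ht.1).trans h0

/-- Symmetric Taylor expansion. -/
lemma sym_taylor {f f1 f2 f3 f4 : ℝ → ℝ} (h1 : ∀ t, HasDerivAt f (f1 t) t)
    (h2 : ∀ t, HasDerivAt f1 (f2 t) t) (h3 : ∀ t, HasDerivAt f2 (f3 t) t)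
    (h4 : ∀ t, HasDerivAt f3 (f4 t) t) {M : ℝ} (hM : ∀ t ∈ Set.Icc (-1:ℝ) 1, f4 t ≤ M) :
    f 1 + f (-1) ≤ 2 * f 0 + f2 0 + M / 12 := by
  have hneg : ∀ {g g' : ℝ → ℝ}, (∀ t, HasDerivAt g (g' t) t) →
      ∀ t, HasDerivAt (fun t => g (-t)) (-(g' (-t))) t := by
    intro g g' hg t
    have := (hg (-t)).scomp t (hasDerivAt_neg t)
    simpa [Function.comp_def] using this
  have A3 := aux_nonpos (f := fun t => f3 t - f3 (-t) - 2 * M * t)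
    (f' := fun t => f4 t - (-(f4 (-t))) - 2 * M * 1)
    (fun t => ((h4 t).sub (hneg h4 t)).sub ((hasDerivAt_id t).const_mul (2 * M))) (by simp)
    (fun t ht => by
      have a := hM t ⟨by linarith [ht.1], ht.2⟩
      have b := hM (-t) ⟨by linarith [ht.2], by linarith [ht.1]⟩
      linarith)
  have A2 := aux_nonpos (f := fun t => f2 t + f2 (-t) - 2 * f2 0 - M * t ^ 2)
    (f' := fun t => f3 t + (-(f3 (-t))) - M * (2 * t))
    (fun t => by
      have := (((h3 t).add (hneg h3 t)).sub_const (2 * f2 0)).sub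
        (((hasDerivAt_pow 2 t)).const_mul M)
      exact this.congr_deriv (by norm_num)) (by simp; linarith)
    (fun t ht => by have := A3 t ht; linarith)
  have A1 := aux_nonpos (f := fun t => f1 t - f1 (-t) - 2 * f2 0 * t - M / 3 * t ^ 3)
    (f' := fun t => f2 t - (-(f2 (-t))) - 2 * f2 0 * 1 - M / 3 * (3 * t ^ 2))
    (fun t => by
      have := (((h2 t).sub (hneg h2 t)).sub ((hasDerivAt_id t).const_mul (2 * f2 0))).sub
        (((hasDerivAt_pow 3 t)).const_mul (M / 3))
      exact this.congr_deriv (by norm_num)) (by simp)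
    (fun t ht => by have := A2 t ht; linarith)
  have A0 := aux_nonpos (f := fun t => f t + f (-t) - 2 * f 0 - f2 0 * t ^ 2 - M / 12 * t ^ 4)
    (f' := fun t => f1 t + (-(f1 (-t))) - f2 0 * (2 * t) - M / 12 * (4 * t ^ 3))
    (fun t => by
      have := ((((h1 t).add (hneg h1 t)).sub_const (2 * f 0)).sub
        ((hasDerivAt_pow 2 t).const_mul (f2 0))).sub
        (((hasDerivAt_pow 4 t)).const_mul (M / 12))
      exact this.congr_deriv (by norm_num)) (by simp; linarith)
    (fun t ht => by have := A1 t ht; linarith)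
  have := A0 1 ⟨zero_le_one, le_rfl⟩
  norm_num at this
  linarith

/-- One-sided trapezoidal error. -/
lemma trap_one {f f1 f2 f3 : ℝ → ℝ} (h1 : ∀ t, HasDerivAt f (f1 t) t)
    (h2 : ∀ t, HasDerivAt f1 (f2 t) t) (h3 : ∀ t, HasDerivAt f2 (f3 t) t)
    {M : ℝ} (hM : ∀ t ∈ Set.Icc (0:ℝ) 1, |f3 t| ≤ M) :
    f 1 - f 0 - (f1 0 + f1 1) / 2 ≤ M / 4 := by
  have hM0 : 0 ≤ M := (abs_nonneg _).trans (hM 0 ⟨le_rfl, zero_le_one⟩)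
  have A1 := aux_nonpos (f := fun t => f1 t / 2 - f1 0 / 2 - t * f2 t / 2 - M / 2 * t)
    (f' := fun t => f2 t / 2 - (1 * f2 t + t * f3 t) / 2 - M / 2 * 1)
    (fun t => ((((h2 t).div_const 2).sub_const _).sub
      (((hasDerivAt_id t).mul (h3 t)).div_const 2)).sub ((hasDerivAt_id t).const_mul (M / 2)))
    (by simp)
    (fun t ht => by
      have a := hM t ht
      have b := (abs_le.1 a).1
      nlinarith [ht.1, ht.2])
  have A0 := aux_nonpos (f := fun t => f t - f 0 - t * (f1 0 + f1 t) / 2 - M / 4 * t ^ 2)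
    (f' := fun t => f1 t - (1 * (f1 0 + f1 t) + t * f2 t) / 2 - M / 4 * (2 * t))
    (fun t => by
      have := (((h1 t).sub_const (f 0)).sub
        (((hasDerivAt_id t).mul ((h2 t).const_add (f1 0))).div_const 2)).sub
        ((hasDerivAt_pow 2 t).const_mul (M / 4))
      exact this.congr_deriv (by norm_num)) (by simp)
    (fun t ht => by have := A1 t ht; linarith)
  have := A0 1 ⟨zero_le_one, le_rfl⟩
  norm_num at this
  linarith

/-- Trapezoidal error. -/
lemma trap_abs {f f1 f2 f3 : ℝ → ℝ} (h1 : ∀ t, HasDerivAt f (f1 t) t)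
    (h2 : ∀ t, HasDerivAt f1 (f2 t) t) (h3 : ∀ t, HasDerivAt f2 (f3 t) t)
    {M : ℝ} (hM : ∀ t ∈ Set.Icc (0:ℝ) 1, |f3 t| ≤ M) :
    |f 1 - f 0 - (f1 0 + f1 1) / 2| ≤ M / 4 := by
  rw [abs_le]
  refine ⟨?_, trap_one h1 h2 h3 hM⟩
  have := trap_one (f := fun t => -f t) (f1 := fun t => -f1 t) (f2 := fun t => -f2 t)
    (f3 := fun t => -f3 t) (fun t => (h1 t).neg) (fun t => (h2 t).neg) (fun t => (h3 t).neg)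
    (M := M) (fun t ht => by rw [abs_neg]; exact hM t ht)
  linarith

/-- Second-order upper bound. -/
lemma taylor_two {f f1 f2 : ℝ → ℝ} (h1 : ∀ t, HasDerivAt f (f1 t) t)
    (h2 : ∀ t, HasDerivAt f1 (f2 t) t)
    {M : ℝ} (hM : ∀ t ∈ Set.Icc (0:ℝ) 1, f2 t ≤ M) :
    f 1 ≤ f 0 + f1 0 + M / 2 := by
  have A1 := aux_nonpos (f := fun t => f1 t - f1 0 - M * t)
    (f' := fun t => f2 t - M * 1)
    (fun t => ((h2 t).sub_const _).sub ((hasDerivAt_id t).const_mul M))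
    (by simp) (fun t ht => by have := hM t ht; linarith)
  have A0 := aux_nonpos (f := fun t => f t - f 0 - f1 0 * t - M / 2 * t ^ 2)
    (f' := fun t => f1 t - f1 0 * 1 - M / 2 * (2 * t))
    (fun t => by
      have := (((h1 t).sub_const (f 0)).sub ((hasDerivAt_id t).const_mul (f1 0))).sub
        ((hasDerivAt_pow 2 t).const_mul (M / 2))
      exact this.congr_deriv (by norm_num)) (by simp)
    (fun t ht => by have := A1 t ht; linarith)
  have := A0 1 ⟨zero_le_one, le_rfl⟩
  norm_num at this
  linarith

/-- `k`-th derivative along a line. -/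
def Dk {n : ℕ} (U : Euc n → ℝ) (k : ℕ) (z w : Euc n) : ℝ :=
  iteratedFDeriv ℝ k U z (fun _ => w)

lemma Dk_zero {n : ℕ} (U : Euc n → ℝ) (z w : Euc n) : Dk U 0 z w = U z := by
  simp [Dk]

lemma Dk_one {n : ℕ} (U : Euc n → ℝ) (z w : Euc n) :
    Dk U 1 z w = inner ℝ (gradient U z) w := by
  rw [Dk, iteratedFDeriv_one_apply]
  rw [gradient, InnerProductSpace.toDual_symm_apply]

lemma Dk_two {n : ℕ} (U : Euc n → ℝ) (z w : Euc n) : Dk U 2 z w = D2 U z w w := by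
  rw [Dk, D2]
  congr 1
  ext i
  fin_cases i <;> rfl

lemma Dk_hasDerivAt {n : ℕ} {U : Euc n → ℝ} (hU : ContDiff ℝ 4 U) {k : ℕ} (hk : k < 4)
    (z w : Euc n) (t : ℝ) :
    HasDerivAt (fun t : ℝ => Dk U k (z + t • w) w) (Dk U (k + 1) (z + t • w) w) t := by
  have hd : Differentiable ℝ (iteratedFDeriv ℝ k U) :=
    hU.differentiable_iteratedFDeriv (by exact_mod_cast hk)
  have h1 : HasDerivAt (fun t : ℝ => z + t • w) w t := by
    simpa using ((hasDerivAt_id t).smul_const w).const_add z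
  have h2 := (hd (z + t • w)).hasFDerivAt.comp_hasDerivAt t h1
  have h3 := ((ContinuousMultilinearMap.apply ℝ (fun _ : Fin k => Euc n) ℝ
    (fun _ => w)).hasFDerivAt).comp_hasDerivAt t h2
  unfold Dk
  rw [iteratedFDeriv_succ_apply_left]
  exact h3

lemma Dk_le {n : ℕ} (U : Euc n → ℝ) (k : ℕ) (z w : Euc n) :
    |Dk U k z w| ≤ ‖iteratedFDeriv ℝ k U z‖ * ‖w‖ ^ k := by
  have := (iteratedFDeriv ℝ k U z).le_opNorm (fun _ => w)
  simpa [Dk] using this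

lemma norm_iter_one {n : ℕ} (U : Euc n → ℝ) (z : Euc n) :
    ‖gradient U z‖ = ‖fderiv ℝ U z‖ := by
  rw [gradient, LinearIsometryEquiv.norm_map]

lemma gauss_one_sq {b : ℝ} (hb : 0 < b) :
    ∫ t : ℝ, t * t * exp (-b * t ^ 2) = 1 / (2 * b) * ∫ t : ℝ, exp (-b * t ^ 2) := by
  have hI1 : Integrable (fun t : ℝ => exp (-b * t ^ 2)) := integrable_exp_neg_mul_sq hb
  have hI2 : Integrable (fun t : ℝ => t * exp (-b * t ^ 2)) := integrable_mul_exp_neg_mul_sq hb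
  have hI3 : Integrable (fun t : ℝ => t ^ 2 * exp (-b * t ^ 2)) := by
    have := integrable_rpow_mul_exp_neg_mul_sq hb (s := 2) (by norm_num)
    simpa using this
  have hv : ∀ t : ℝ, HasDerivAt (fun t : ℝ => -(1 / (2 * b)) * exp (-b * t ^ 2))
      (t * exp (-b * t ^ 2)) t := by
    intro t
    have h1 : HasDerivAt (fun t : ℝ => -b * t ^ 2) (-b * (2 * t)) t := by
      have := (hasDerivAt_pow 2 t).const_mul (-b)
      exact this.congr_deriv (by norm_num)
    have h2 := (h1.exp).const_mul (-(1 / (2 * b)))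
    refine h2.congr_deriv ?_
    field_simp
  have key := integral_mul_deriv_eq_deriv_mul_of_integrable (u := fun t : ℝ => t)
    (u' := fun _ => 1) (v := fun t : ℝ => -(1 / (2 * b)) * exp (-b * t ^ 2))
    (v' := fun t => t * exp (-b * t ^ 2)) (fun t _ => hasDerivAt_id t) (fun t _ => hv t)
    (by refine hI3.congr (Eventually.of_forall fun t => ?_); simp; ring)
    (by refine (hI1.const_mul (-(1 / (2 * b)))).congr (Eventually.of_forall fun t => ?_); simp)
    (by refine (hI2.const_mul (-(1 / (2 * b)))).congr (Eventually.of_forall fun t => ?_)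
        simp; ring)
  simp only [mul_assoc] at key ⊢
  rw [key]
  simp only [one_mul]
  rw [integral_const_mul]
  ring

lemma gauss_one_odd (b : ℝ) : ∫ t : ℝ, t * exp (-b * t ^ 2) = 0 := by
  have h := integral_neg_eq_self (fun t : ℝ => t * exp (-b * t ^ 2)) volume
  simp only [neg_mul, even_two, Even.neg_pow, integral_neg] at h ⊢
  linarith

lemma gauss_integrable (n : ℕ) {b : ℝ} (hb : 0 < b) :
    Integrable (fun ξ : Euc n => exp (-b * ‖ξ‖ ^ 2)) := by
  have h := GaussianFourier.integral_rexp_neg_mul_sq_norm (V := Euc n) hb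
  by_contra hc
  rw [integral_undef hc] at h
  have : (0:ℝ) < (π / b) ^ ((Module.finrank ℝ (Euc n) : ℝ) / 2) := by positivity
  linarith

lemma gauss_prod (n : ℕ) (b : ℝ) (f : Fin n → ℝ → ℝ) :
    ∫ ξ : Euc n, (∏ k, f k (ξ k)) * exp (-b * ‖ξ‖ ^ 2)
      = ∏ k, ∫ t : ℝ, f k t * exp (-b * t ^ 2) := by
  rw [← (PiLp.volume_preserving_toLp (Fin n)).integral_comp
    (MeasurableEquiv.toLp 2 _).measurableEmbedding,
    ← integral_fintype_prod_volume_eq_prod]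
  congr 1
  ext v
  rw [Finset.prod_mul_distrib, ← exp_sum, EuclideanSpace.real_norm_sq_eq, Finset.mul_sum]

lemma gauss_ij (n : ℕ) {b : ℝ} (hb : 0 < b) (i j : Fin n) :
    ∫ ξ : Euc n, ξ i * ξ j * exp (-b * ‖ξ‖ ^ 2)
      = if i = j then 1 / (2 * b) * ∫ ξ : Euc n, exp (-b * ‖ξ‖ ^ 2) else 0 := by
  have h := gauss_prod n b (fun k t => (if k = i then t else 1) * (if k = j then t else 1))
  have h0 := gauss_prod n b (fun k t => 1)
  simp only [Finset.prod_const_one, one_mul] at h0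
  simp only [Finset.prod_mul_distrib, Finset.prod_ite_eq', Finset.mem_univ, if_true] at h
  rw [h, h0]
  split_ifs with hij
  · subst hij
    have : ∀ k, (∫ t : ℝ, (if k = i then t else 1) * (if k = i then t else 1) * exp (-b * t ^ 2))
        = (if k = i then 1 / (2 * b) else 1) * ∫ t : ℝ, exp (-b * t ^ 2) := by
      intro k
      split_ifs with hk
      · exact gauss_one_sq hb
      · simp
    simp only [this, Finset.prod_mul_distrib, Finset.prod_ite_eq', Finset.mem_univ, if_true]
  · apply Finset.prod_eq_zero (Finset.mem_univ i)
    simp only [if_true, hij, if_false, mul_one]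
    exact gauss_one_odd b

lemma sq_mul_exp_le {b r : ℝ} (hb : 0 < b) :
    r ^ 2 * exp (-b * r ^ 2) ≤ 2 / b * exp (-(b / 2) * r ^ 2) := by
  have h1 : b / 2 * r ^ 2 ≤ exp (b / 2 * r ^ 2) := by linarith [add_one_le_exp (b / 2 * r ^ 2)]
  have h2 : exp (-(b / 2) * r ^ 2) = exp (b / 2 * r ^ 2) * exp (-b * r ^ 2) := by
    rw [← exp_add]; congr 1; ring
  rw [h2]
  have h3 : r ^ 2 ≤ 2 / b * exp (b / 2 * r ^ 2) := by
    rw [div_mul_eq_mul_div, le_div_iff₀ hb]; linarith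
  nlinarith [exp_pos (-b * r ^ 2)]

lemma gauss_quad_integrable (n : ℕ) {b : ℝ} (hb : 0 < b) (B : Euc n →L[ℝ] Euc n →L[ℝ] ℝ) :
    Integrable (fun ξ : Euc n => B ξ ξ * exp (-b * ‖ξ‖ ^ 2)) := by
  refine Integrable.mono' ((gauss_integrable n (half_pos hb)).const_mul (‖B‖ * (2 / b))) ?_ ?_
  · apply Continuous.aestronglyMeasurable
    fun_prop
  · refine Eventually.of_forall fun ξ => ?_
    rw [norm_mul, norm_of_nonneg (exp_pos _).le]
    have h1 := B.le_opNorm₂ ξ ξ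
    have h2 := sq_mul_exp_le (r := ‖ξ‖) hb
    calc ‖B ξ ξ‖ * exp (-b * ‖ξ‖ ^ 2) ≤ (‖B‖ * ‖ξ‖ * ‖ξ‖) * exp (-b * ‖ξ‖ ^ 2) := by gcongr
      _ = ‖B‖ * (‖ξ‖ ^ 2 * exp (-b * ‖ξ‖ ^ 2)) := by ring
      _ ≤ ‖B‖ * (2 / b * exp (-(b / 2) * ‖ξ‖ ^ 2)) := by gcongr
      _ = _ := by ring

lemma gauss_quad (n : ℕ) {b : ℝ} (hb : 0 < b) (B : Euc n →L[ℝ] Euc n →L[ℝ] ℝ) :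
    ∫ ξ : Euc n, B ξ ξ * exp (-b * ‖ξ‖ ^ 2)
      = 1 / (2 * b) * (∑ i, B (EuclideanSpace.single i 1) (EuclideanSpace.single i 1)) *
        ∫ ξ : Euc n, exp (-b * ‖ξ‖ ^ 2) := by
  have hexp : ∀ ξ : Euc n, B ξ ξ = ∑ i, ∑ j, ξ i * ξ j *
      B (EuclideanSpace.single i 1) (EuclideanSpace.single j 1) := by
    intro ξ
    have hx : ξ = ∑ i, ξ i • EuclideanSpace.single i (1:ℝ) := by
      ext k
      simp [Finset.sum_apply, Pi.single_apply]
    conv_lhs => rw [hx]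
    simp only [map_sum, map_smul, _root_.sum_apply, _root_.smul_apply,
      smul_eq_mul, Finset.mul_sum]
    rw [Finset.sum_comm]
    refine Finset.sum_congr rfl fun i _ => Finset.sum_congr rfl fun j _ => ?_
    ring
  have hint : ∀ i j : Fin n, Integrable (fun ξ : Euc n => ξ i * ξ j * exp (-b * ‖ξ‖ ^ 2)) := by
    intro i j
    refine Integrable.mono' ((gauss_integrable n (half_pos hb)).const_mul (2 / b)) ?_ ?_
    · apply Continuous.aestronglyMeasurable
      fun_prop
    · refine Eventually.of_forall fun ξ => ?_
      rw [norm_mul, norm_of_nonneg (exp_pos _).le, norm_mul]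
      have h2 := sq_mul_exp_le (r := ‖ξ‖) hb
      refine le_trans ?_ h2
      rw [sq]
      gcongr
      · exact PiLp.norm_apply_le ξ i
      · exact PiLp.norm_apply_le ξ j
  have hfun : (fun ξ : Euc n => B ξ ξ * exp (-b * ‖ξ‖ ^ 2)) = fun ξ => ∑ i, ∑ j, ξ i * ξ j *
      B (EuclideanSpace.single i 1) (EuclideanSpace.single j 1) * exp (-b * ‖ξ‖ ^ 2) := by
    ext ξ
    rw [hexp ξ]
    simp only [Finset.sum_mul]
  rw [hfun]
  have hint2 : ∀ i j : Fin n, Integrable (fun ξ : Euc n => ξ i * ξ j *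
      B (EuclideanSpace.single i 1) (EuclideanSpace.single j 1) * exp (-b * ‖ξ‖ ^ 2)) := by
    intro i j
    refine ((hint i j).mul_const
      (B (EuclideanSpace.single i 1) (EuclideanSpace.single j 1))).congr
      (Eventually.of_forall fun ξ => ?_)
    dsimp only
    ring
  rw [integral_finsetSum _ (fun i _ => integrable_finsetSum _ fun j _ => hint2 i j)]
  rw [Finset.mul_sum, Finset.sum_mul]
  refine Finset.sum_congr rfl fun i _ => ?_
  rw [integral_finsetSum _ (fun j _ => hint2 i j)]
  have hterm : ∀ j, (∫ ξ : Euc n, ξ i * ξ j *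
      B (EuclideanSpace.single i 1) (EuclideanSpace.single j 1) * exp (-b * ‖ξ‖ ^ 2))
      = if i = j then 1 / (2 * b) * (∫ ξ : Euc n, exp (-b * ‖ξ‖ ^ 2)) *
        B (EuclideanSpace.single i 1) (EuclideanSpace.single j 1) else 0 := by
    intro j
    have h := gauss_ij n hb i j
    calc (∫ ξ : Euc n, ξ i * ξ j *
          B (EuclideanSpace.single i 1) (EuclideanSpace.single j 1) * exp (-b * ‖ξ‖ ^ 2))
      _ = ∫ ξ : Euc n, ξ i * ξ j * exp (-b * ‖ξ‖ ^ 2) *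
          B (EuclideanSpace.single i 1) (EuclideanSpace.single j 1) := by
          congr 1; ext ξ; ring
      _ = _ := by
          rw [integral_mul_const, h]
          split_ifs <;> simp
  simp only [hterm, Finset.sum_ite_eq, Finset.mem_univ, if_true]
  ring

/-- Affine change of variables. -/
lemma change_var (n : ℕ) (f : Euc n → ℝ) (m : Euc n) {s : ℝ} (hs : 0 < s) :
    ∫ y, f y = s ^ n * ∫ ξ : Euc n, f (m + s • ξ) := by
  have h := Measure.integral_comp_smul (volume : Measure (Euc n)) (fun w => f (m + w)) s
  rw [h, integral_add_left_eq_self]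
  simp only [finrank_euclideanSpace, Fintype.card_fin, smul_eq_mul]
  rw [abs_of_pos (by positivity)]
  field_simp

lemma change_var_integrable (n : ℕ) (f : Euc n → ℝ) (m : Euc n) {s : ℝ} (hs : 0 < s)
    (h : Integrable (fun ξ : Euc n => f (m + s • ξ))) : Integrable f := by
  have h1 := (integrable_comp_smul_iff (volume : Measure (Euc n)) (fun w => f (m + w)) hs.ne').1 h
  have h2 := h1.comp_add_left (-m)
  simpa using h2

/-- The part of Assumption 1 used for local estimates. -/
structure Pot (n : ℕ) (U : Euc n → ℝ) (C : ℝ) : Prop where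
  smooth : ContDiff ℝ 4 U
  one_le : ∀ x, 1 ≤ U x
  C_pos : 0 < C
  bd : ∀ k, 1 ≤ k → k ≤ 4 → ∀ z, ‖iteratedFDeriv ℝ k U z‖ ≤ C * U z
  grad : ∀ z, ‖gradient U z‖ ≤ C * U z

lemma pot_of_assumption {n : ℕ} {β : ℝ} {U : Euc n → ℝ} (hU : Assumption1 n β U) :
    ∃ C, Pot n U C := by
  obtain ⟨C, hC, h⟩ := hU.deriv_bound
  refine ⟨C, hU.smooth, hU.one_le, hC, ?_, ?_⟩
  · intro k h1 h4 z
    have hz := h z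
    simp only [sup_le_iff] at hz
    obtain ⟨⟨⟨a4, a3⟩, a2⟩, a1⟩ := hz
    interval_cases k
    · rw [norm_iteratedFDeriv_one, ← norm_iter_one]; exact a1
    · exact a2
    · exact a3
    · exact a4
  · intro z
    have hz := h z
    simp only [sup_le_iff] at hz
    exact hz.2

namespace Pot

variable {n : ℕ} {U : Euc n → ℝ} {C : ℝ}

lemma growth (P : Pot n U C) (x y : Euc n) : U y ≤ U x * exp (C * ‖y - x‖) := by
  set v := y - x with hv
  have hψ : ∀ t : ℝ, HasDerivAt (fun t : ℝ => U (x + t • v)) (Dk U 1 (x + t • v) v) t := by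
    intro t
    have := Dk_hasDerivAt P.smooth (k := 0) (by norm_num) x v t
    simpa only [Dk_zero] using this
  have he : ∀ t : ℝ, HasDerivAt (fun t : ℝ => exp (-(C * ‖v‖) * t))
      (exp (-(C * ‖v‖) * t) * (-(C * ‖v‖) * 1)) t := fun t =>
    ((hasDerivAt_id t).const_mul (-(C * ‖v‖))).exp
  have key := aux_nonpos (fun t => ((hψ t).mul (he t)).sub_const (U x)) (by simp)
    (fun t _ => by
      have h1 := Dk_le U 1 (x + t • v) v
      have h2 := P.bd 1 le_rfl (by norm_num) (x + t • v)
      have h3 : Dk U 1 (x + t • v) v ≤ C * U (x + t • v) * ‖v‖ := by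
        refine (le_abs_self _).trans (h1.trans ?_)
        rw [pow_one]
        gcongr
      have h4 := exp_pos (-(C * ‖v‖) * t)
      nlinarith) 1 ⟨zero_le_one, le_rfl⟩
  have hy : x + v = y := by simp [hv]
  simp only [Pi.mul_apply, one_smul, mul_one, hy] at key
  have h5 : exp (-(C * ‖v‖)) * exp (C * ‖v‖) = 1 := by rw [← exp_add]; simp
  have h6 := exp_pos (C * ‖v‖)
  calc U y = U y * exp (-(C * ‖v‖)) * exp (C * ‖v‖) := by rw [mul_assoc, h5, mul_one]
    _ ≤ U x * exp (C * ‖v‖) := by gcongr; linarith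

/-- local constant -/
def D (C : ℝ) : ℝ := C * exp (C * (1 + C))

lemma D_pos (P : Pot n U C) : 0 < D C := mul_pos P.C_pos (exp_pos _)

lemma U_loc (P : Pot n U C) {x z : Euc n} (hz : ‖z - x‖ ≤ 1 + C) : C * U z ≤ D C * U x := by
  have := P.growth x z
  have hC := P.C_pos
  have h1 := P.one_le x
  calc C * U z ≤ C * (U x * exp (C * ‖z - x‖)) := by gcongr
    _ ≤ C * (U x * exp (C * (1 + C))) := by gcongr
    _ = D C * U x := by rw [D]; ring

lemma bd_loc (P : Pot n U C) {x z : Euc n} (hz : ‖z - x‖ ≤ 1 + C) {k : ℕ} (h1 : 1 ≤ k)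
    (h4 : k ≤ 4) : ‖iteratedFDeriv ℝ k U z‖ ≤ D C * U x :=
  (P.bd k h1 h4 z).trans (P.U_loc hz)

lemma Dk_loc (P : Pot n U C) {x z : Euc n} (hz : ‖z - x‖ ≤ 1 + C) {k : ℕ} (h1 : 1 ≤ k)
    (h4 : k ≤ 4) (w : Euc n) : |Dk U k z w| ≤ D C * U x * ‖w‖ ^ k :=
  (Dk_le U k z w).trans (by gcongr; exact P.bd_loc hz h1 h4)

lemma grad_loc (P : Pot n U C) {x z : Euc n} (hz : ‖z - x‖ ≤ 1 + C) :
    ‖gradient U z‖ ≤ D C * U x :=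
  (P.grad z).trans (P.U_loc hz)

lemma ball_mem {x z : Euc n} (hz : ‖z - x‖ ≤ 1 + C) : z ∈ Metric.closedBall x (1 + C) := by
  rwa [Metric.mem_closedBall, dist_eq_norm]

lemma U_lip (P : Pot n U C) {x z : Euc n} (hz : ‖z - x‖ ≤ 1 + C) :
    |U z - U x| ≤ D C * U x * ‖z - x‖ := by
  have hd : Differentiable ℝ U := P.smooth.differentiable (by norm_num)
  have := (convex_closedBall x (1 + C)).norm_image_sub_le_of_norm_fderiv_le (𝕜 := ℝ) (f := U)
    (C := D C * U x) (fun w _ => hd w) (fun w hw => by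
      rw [← norm_iter_one]
      rw [Metric.mem_closedBall, dist_eq_norm] at hw
      exact P.grad_loc hw) (Metric.mem_closedBall_self (by linarith [P.C_pos])) (ball_mem hz)
  simpa using this

lemma grad_lip (P : Pot n U C) {x z : Euc n} (hz : ‖z - x‖ ≤ 1 + C) :
    ‖gradient U z - gradient U x‖ ≤ D C * U x * ‖z - x‖ := by
  have hd : Differentiable ℝ (fderiv ℝ U) :=
    (P.smooth.fderiv_right (m := 1) (by norm_num)).differentiable (by norm_num)
  have := (convex_closedBall x (1 + C)).norm_image_sub_le_of_norm_fderiv_le (𝕜 := ℝ)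
    (f := fderiv ℝ U)
    (C := D C * U x) (fun w _ => hd w) (fun w hw => by
      rw [Metric.mem_closedBall, dist_eq_norm] at hw
      rw [← norm_iteratedFDeriv_one, norm_iteratedFDeriv_fderiv]
      exact P.bd_loc hw (by norm_num) (by norm_num))
    (Metric.mem_closedBall_self (by linarith [P.C_pos])) (ball_mem hz)
  rwa [gradient, gradient, ← map_sub, LinearIsometryEquiv.norm_map]

lemma grad_sq (P : Pot n U C) {x z : Euc n} (hz : ‖z - x‖ ≤ 1 + C) :
    |‖gradient U z‖ ^ 2 - ‖gradient U x‖ ^ 2| ≤ 2 * (D C * U x) ^ 2 * ‖z - x‖ := by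
  have h1 := P.grad_lip hz
  have h2 := P.grad_loc hz
  have h3 := P.grad_loc (x := x) (z := x) (by simp; linarith [P.C_pos])
  have h4 := abs_norm_sub_norm_le (gradient U z) (gradient U x)
  have hD : 0 ≤ D C * U x := (norm_nonneg _).trans h2
  rw [sq_sub_sq, abs_mul, abs_of_nonneg (by positivity)]
  calc (‖gradient U z‖ + ‖gradient U x‖) * |‖gradient U z‖ - ‖gradient U x‖|
      ≤ (D C * U x + D C * U x) * (D C * U x * ‖z - x‖) := by
        gcongr
        exact h4.trans h1
    _ = _ := by ring

lemma seg {x v : Euc n} {r : ℝ} (hv : ‖v‖ ≤ r) {t : ℝ} (ht : t ∈ Set.Icc (0:ℝ) 1) :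
    ‖x + t • v - x‖ ≤ r := by
  rw [add_sub_cancel_left, norm_smul, norm_of_nonneg ht.1]
  exact (mul_le_of_le_one_left (norm_nonneg _) ht.2).trans hv

lemma line0 (P : Pot n U C) (x v : Euc n) (t : ℝ) :
    HasDerivAt (fun t : ℝ => U (x + t • v)) (Dk U 1 (x + t • v) v) t := by
  have := Dk_hasDerivAt P.smooth (k := 0) (by norm_num) x v t
  simpa only [Dk_zero] using this

lemma trap (P : Pot n U C) {x v : Euc n} (hv : ‖v‖ ≤ 1 + C) :
    |U (x + v) - U x - inner ℝ v (gradient U x + gradient U (x + v)) / 2|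
      ≤ D C * U x * ‖v‖ ^ 3 / 4 := by
  have := trap_abs (P.line0 x v) (Dk_hasDerivAt P.smooth (k := 1) (by norm_num) x v)
    (Dk_hasDerivAt P.smooth (k := 2) (by norm_num) x v) (M := D C * U x * ‖v‖ ^ 3)
    (fun t ht => P.Dk_loc (seg hv ht) (by norm_num) (by norm_num) v)
  simp only [one_smul, zero_smul, add_zero, Dk_one] at this
  rwa [inner_add_right, real_inner_comm, real_inner_comm (gradient U (x + v))]

lemma descent (P : Pot n U C) {x v : Euc n} (hv : ‖v‖ ≤ 1 + C) :
    U (x + v) ≤ U x + inner ℝ (gradient U x) v + D C * U x * ‖v‖ ^ 2 / 2 := by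
  have := taylor_two (P.line0 x v) (Dk_hasDerivAt P.smooth (k := 1) (by norm_num) x v)
    (M := D C * U x * ‖v‖ ^ 2)
    (fun t ht => (le_abs_self _).trans (P.Dk_loc (seg hv ht) (by norm_num) (by norm_num) v))
  simpa only [one_smul, zero_smul, add_zero, Dk_one] using this

end Pot

/-- Logarithm of the Metropolis ratio. -/
def logR {n : ℕ} (β h : ℝ) (U : Euc n → ℝ) (x y : Euc n) : ℝ :=
  -β * (U y - U x) - β / (4 * h) *
    (‖x - y + h • gradient U y‖ ^ 2 - ‖y - x + h • gradient U x‖ ^ 2)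

lemma accept_eq {n : ℕ} {β h : ℝ} (hβ : 0 < β) (hh : 0 < h) (U : Euc n → ℝ) (x y : Euc n) :
    accept n β h U x y = min 1 (exp (logR β h U x y)) := by
  unfold accept eulerDensity
  congr 1
  have hc : (0:ℝ) < (4 * π * β⁻¹ * h) ^ (-(n : ℝ) / 2) := by positivity
  generalize (4 * π * β⁻¹ * h) ^ (-(n : ℝ) / 2) = c0 at hc ⊢
  rw [mul_assoc c0, mul_assoc c0, mul_div_mul_left _ _ hc.ne', ← exp_add, ← exp_add, ← exp_sub]
  congr 1
  unfold logR
  field_simp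
  ring

lemma logR_eq {n : ℕ} {β h : ℝ} (hh : 0 < h) (U : Euc n → ℝ) (x v : Euc n) :
    logR β h U x (x + v) =
      -β * (U (x + v) - U x - inner ℝ v (gradient U x + gradient U (x + v)) / 2)
      - β * h / 4 * (‖gradient U (x + v)‖ ^ 2 - ‖gradient U x‖ ^ 2) := by
  unfold logR
  have e1 : x - (x + v) + h • gradient U (x + v) = h • gradient U (x + v) - v := by abel
  have e2 : x + v - x + h • gradient U x = h • gradient U x + v := by abel
  rw [e1, e2, norm_sub_sq_real, norm_add_sq_real, inner_smul_left, inner_smul_left, norm_smul,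
    norm_smul, inner_add_right, real_inner_comm v, real_inner_comm v]
  simp only [conj_trivial, norm_of_nonneg hh.le]
  field_simp
  ring

lemma logR_bound {n : ℕ} {β h : ℝ} (hβ : 0 < β) (hh : 0 < h) {U : Euc n → ℝ} {C : ℝ}
    (P : Pot n U C) {x v : Euc n} (hv : ‖v‖ ≤ 1 + C) :
    |logR β h U x (x + v)| ≤ β * (Pot.D C * U x * ‖v‖ ^ 3 / 4)
      + β * h / 4 * (2 * (Pot.D C * U x) ^ 2 * ‖v‖) := by
  rw [logR_eq hh]
  have h1 := P.trap (x := x) hv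
  have h2 := P.grad_sq (x := x) (z := x + v) (by simpa using hv)
  rw [add_sub_cancel_left] at h2
  refine (abs_sub _ _).trans ?_
  have h3 : (0:ℝ) < β * h / 4 := by positivity
  rw [abs_mul, abs_mul, abs_neg, abs_of_pos hβ, abs_of_pos h3]
  gcongr

lemma one_sub_accept {n : ℕ} {β h : ℝ} (hβ : 0 < β) (hh : 0 < h) (U : Euc n → ℝ) (x y : Euc n) :
    |1 - accept n β h U x y| ≤ |logR β h U x y| := by
  rw [accept_eq hβ hh]
  rcases le_total 1 (exp (logR β h U x y)) with h1 | h1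
  · rw [min_eq_left h1]; simp
  · rw [min_eq_right h1, abs_of_nonneg (by linarith)]
    have := add_one_le_exp (logR β h U x y)
    have := neg_abs_le (logR β h U x y)
    linarith

lemma accept_nonneg {n : ℕ} {β h : ℝ} (hβ : 0 < β) (hh : 0 < h) (U : Euc n → ℝ) (x y : Euc n) :
    0 ≤ accept n β h U x y := by
  rw [accept_eq hβ hh]; positivity

lemma accept_le_one {n : ℕ} (β h : ℝ) (U : Euc n → ℝ) (x y : Euc n) :
    accept n β h U x y ≤ 1 := min_le_left _ _

/-- Global bound of the accepted exponential weight. -/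
lemma accept_mul_exp {n : ℕ} {β h θ : ℝ} (hβ : 0 < β) (hh : 0 < h) (hθ : 0 ≤ θ) (hθ2 : θ ≤ β / 2)
    (U : Euc n → ℝ) (x y : Euc n) :
    accept n β h U x y * exp (θ * (U y - U x)) ≤
      exp (β / (8 * h) * ‖y - x + h • gradient U x‖ ^ 2) := by
  set w2 := ‖y - x + h • gradient U x‖ ^ 2 with hw2
  have hw : 0 ≤ w2 := by positivity
  have h1 : accept n β h U x y ≤ exp (θ / β * logR β h U x y) := by
    rw [accept_eq hβ hh]
    rcases le_total 0 (logR β h U x y) with h0 | h0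
    · exact (min_le_left _ _).trans (one_le_exp (by positivity))
    · refine (min_le_right _ _).trans (exp_le_exp.2 ?_)
      have : θ / β ≤ 1 := by rw [div_le_one hβ]; linarith
      nlinarith
  have h2 : logR β h U x y ≤ -β * (U y - U x) + β / (4 * h) * w2 := by
    unfold logR
    rw [← hw2]
    have : 0 ≤ β / (4 * h) * ‖x - y + h • gradient U y‖ ^ 2 := by positivity
    linarith
  calc accept n β h U x y * exp (θ * (U y - U x))
      ≤ exp (θ / β * logR β h U x y) * exp (θ * (U y - U x)) := by gcongr
    _ ≤ exp (θ / β * (-β * (U y - U x) + β / (4 * h) * w2)) * exp (θ * (U y - U x)) := by gcongr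
    _ = exp (θ / (4 * h) * w2) := by
        rw [← exp_add]; congr 1; field_simp; ring
    _ ≤ exp (β / (8 * h) * w2) := by
        refine exp_le_exp.2 (mul_le_mul_of_nonneg_right ?_ hw)
        rw [div_le_div_iff₀ (by positivity) (by positivity)]
        nlinarith

lemma abs_exp_sub_one_le' (δ : ℝ) : |exp δ - 1| ≤ |δ| * exp |δ| := by
  rcases le_total 0 δ with h | h
  · rw [abs_of_nonneg h, abs_of_nonneg (by linarith [one_le_exp h])]
    have h1 := add_one_le_exp (-δ)
    have h2 : exp (-δ) * exp δ = 1 := by rw [← exp_add]; simp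
    nlinarith [exp_pos δ]
  · rw [abs_of_nonpos h, abs_of_nonpos (by linarith [exp_le_one_iff.2 h])]
    have h1 := add_one_le_exp δ
    have h2 : 1 ≤ exp (-δ) := one_le_exp (by linarith)
    nlinarith

/-- Symmetric Taylor expansion for the exponential of a function. -/
lemma sym_taylor_exp {f f1 f2 f3 f4 : ℝ → ℝ} (h1 : ∀ t, HasDerivAt f (f1 t) t)
    (h2 : ∀ t, HasDerivAt f1 (f2 t) t) (h3 : ∀ t, HasDerivAt f2 (f3 t) t)
    (h4 : ∀ t, HasDerivAt f3 (f4 t) t) {a q b : ℝ} (ha : 0 ≤ a) (hq : 0 ≤ q)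
    (b0 : ∀ t ∈ Set.Icc (-1:ℝ) 1, f t ≤ b)
    (b1 : ∀ t ∈ Set.Icc (-1:ℝ) 1, |f1 t| ≤ a * q ^ 1)
    (b2 : ∀ t ∈ Set.Icc (-1:ℝ) 1, |f2 t| ≤ a * q ^ 2)
    (b3 : ∀ t ∈ Set.Icc (-1:ℝ) 1, |f3 t| ≤ a * q ^ 3)
    (b4 : ∀ t ∈ Set.Icc (-1:ℝ) 1, |f4 t| ≤ a * q ^ 4) :
    exp (f 1) + exp (f (-1)) ≤ 2 * exp (f 0) + exp (f 0) * (f2 0 + f1 0 ^ 2)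
      + exp b * ((a + 7 * a ^ 2 + 6 * a ^ 3 + a ^ 4) * q ^ 4) / 12 := by
  refine sym_taylor (f := fun t => exp (f t)) (f1 := fun t => exp (f t) * f1 t)
    (f2 := fun t => exp (f t) * (f2 t + f1 t ^ 2))
    (f3 := fun t => exp (f t) * (f3 t + 3 * (f1 t * f2 t) + f1 t ^ 3))
    (f4 := fun t => exp (f t) * (f4 t + 4 * f1 t * f3 t + 3 * f2 t ^ 2 + 6 * f1 t ^ 2 * f2 t
      + f1 t ^ 4)) (fun t => (h1 t).exp) ?_ ?_ ?_ ?_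
  · intro t
    refine ((h1 t).exp.mul (h2 t)).congr_deriv ?_
    ring
  · intro t
    refine ((h1 t).exp.mul ((h3 t).add ((h2 t).pow 2))).congr_deriv ?_
    simp only [Pi.add_apply, Pi.pow_apply]
    push_cast
    ring
  · intro t
    refine ((h1 t).exp.mul (((h4 t).add (((h2 t).mul (h3 t)).const_mul 3)).add
      ((h2 t).pow 3))).congr_deriv ?_
    simp only [Pi.add_apply, Pi.pow_apply, Pi.mul_apply]
    push_cast
    ring
  · intro t ht
    have e0 : exp (f t) ≤ exp b := exp_le_exp.2 (b0 t ht)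
    have c1 := b1 t ht
    have c2 := b2 t ht
    have c3 := b3 t ht
    have c4 := b4 t ht
    have d13 : |f1 t| * |f3 t| ≤ (a * q ^ 1) * (a * q ^ 3) := by gcongr
    have d22 : |f2 t| ^ 2 ≤ (a * q ^ 2) ^ 2 := by gcongr
    have d112 : |f1 t| ^ 2 * |f2 t| ≤ (a * q ^ 1) ^ 2 * (a * q ^ 2) := by gcongr
    have d1 : |f1 t| ^ 4 ≤ (a * q ^ 1) ^ 4 := by gcongr
    have hb : f4 t + 4 * f1 t * f3 t + 3 * f2 t ^ 2 + 6 * f1 t ^ 2 * f2 t + f1 t ^ 4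
        ≤ (a + 7 * a ^ 2 + 6 * a ^ 3 + a ^ 4) * q ^ 4 := by
      have i1 := le_abs_self (f4 t)
      have i2 := le_abs_self (f1 t * f3 t)
      rw [abs_mul] at i2
      have i3 := le_abs_self (f2 t ^ 2)
      rw [abs_pow] at i3
      have i4 := le_abs_self (f1 t ^ 2 * f2 t)
      rw [abs_mul, abs_pow] at i4
      have i5 := le_abs_self (f1 t ^ 4)
      rw [abs_pow] at i5
      calc _ ≤ a * q ^ 4 + 4 * ((a * q ^ 1) * (a * q ^ 3)) + 3 * (a * q ^ 2) ^ 2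
            + 6 * ((a * q ^ 1) ^ 2 * (a * q ^ 2)) + (a * q ^ 1) ^ 4 := by linarith
        _ = _ := by ring
    have hnn : 0 ≤ (a + 7 * a ^ 2 + 6 * a ^ 3 + a ^ 4) * q ^ 4 := by positivity
    exact (mul_le_mul_of_nonneg_left hb (exp_pos (f t)).le).trans
      (mul_le_mul_of_nonneg_right e0 hnn)

section pointwise

variable {n : ℕ} {U : Euc n → ℝ} {C β θ s : ℝ} {x : Euc n}

/-- Mean of the proposal. -/
def pm (U : Euc n → ℝ) (s : ℝ) (x : Euc n) : Euc n := x - s ^ 2 • gradient U x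

/-- Normalized Lyapunov function. -/
def FF (U : Euc n → ℝ) (θ : ℝ) (x z : Euc n) : ℝ := exp (θ * (U z - U x))

/-- Second-order form. -/
def q2 (U : Euc n → ℝ) (θ : ℝ) (m ξ : Euc n) : ℝ :=
  θ * D2 U m ξ ξ + θ ^ 2 * (inner ℝ (gradient U m) ξ) ^ 2

lemma pm_dist (P : Pot n U C) (hs : 0 < s) (hsu : s * U x ≤ 1) (w : Euc n) :
    ‖pm U s x + w - x‖ ≤ ‖w‖ + s * C := by
  have e : pm U s x + w - x = w - s ^ 2 • gradient U x := by unfold pm; abel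
  rw [e]
  refine (norm_sub_le _ _).trans ?_
  rw [norm_smul, norm_of_nonneg (by positivity)]
  have h1 := P.grad x
  have hC := P.C_pos
  have : s ^ 2 * ‖gradient U x‖ ≤ s ^ 2 * (C * U x) := by gcongr
  have h2 : s * C * (s * U x) ≤ s * C * 1 := by gcongr
  nlinarith

lemma delta_bound (P : Pot n U C) (hθ : 0 < θ) (hs : 0 < s) {z : Euc n} {R : ℝ}
    (hz : ‖z - x‖ ≤ 1 + C) (hR : ‖z - x‖ ≤ s * R) :
    |θ * (U z - U x)| ≤ θ * Pot.D C * (s * U x) * R := by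
  rw [abs_mul, abs_of_pos hθ]
  have h1 := P.U_lip hz
  have hD := P.D_pos
  have hu := P.one_le x
  calc θ * |U z - U x| ≤ θ * (Pot.D C * U x * ‖z - x‖) := by gcongr
    _ ≤ θ * (Pot.D C * U x * (s * R)) := by gcongr
    _ = _ := by ring

lemma delta_bound' (P : Pot n U C) (hθ : 0 < θ) (hs : 0 < s) (hsu : s * U x ≤ 1) {z : Euc n}
    {R : ℝ} (hR0 : 0 ≤ R) (hz : ‖z - x‖ ≤ 1 + C) (hR : ‖z - x‖ ≤ s * R) :
    |θ * (U z - U x)| ≤ θ * Pot.D C * R := by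
  refine (delta_bound P hθ hs hz hR).trans ?_
  have hD := P.D_pos
  calc θ * Pot.D C * (s * U x) * R ≤ θ * Pot.D C * 1 * R := by gcongr
    _ = _ := by ring

lemma acc_err (P : Pot n U C) (hβ : 0 < β) (hθ : 0 < θ) (hs : 0 < s) (hsu : s * U x ≤ 1)
    {z : Euc n} {R : ℝ} (hR0 : 0 ≤ R) (hz : ‖z - x‖ ≤ 1 + C) (hR : ‖z - x‖ ≤ s * R) :
    accept n β (s ^ 2) U x z * (FF U θ x z - 1) ≤ (FF U θ x z - 1) +
      β * (Pot.D C + Pot.D C ^ 2) * (θ * Pot.D C) * (s * U x) ^ 4 *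
        ((1 + R) ^ 4 * exp (θ * Pot.D C * R)) := by
  have hD := P.D_pos
  have hu := P.one_le x
  have hu0 : 0 < U x := by linarith
  set u := U x with hu_def
  set D := Pot.D C with hD_def
  have h1 := one_sub_accept hβ (pow_pos hs 2) U x z
  have h2 := logR_bound (h := s ^ 2) hβ (pow_pos hs 2) P (x := x) (v := z - x) hz
  rw [add_sub_cancel] at h2
  have h3 := abs_exp_sub_one_le' (θ * (U z - U x))
  have h4 := delta_bound P hθ hs hz hR
  have h5 := delta_bound' P hθ hs hsu hR0 hz hR
  rw [← hu_def, ← hD_def] at h2 h4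
  rw [← hD_def] at h5
  have h6 : |logR β (s ^ 2) U x z| ≤ β * (D + D ^ 2) * (s * u) ^ 3 * (1 + R) ^ 3 := by
    refine h2.trans ?_
    have k1 : β * (D * u * ‖z - x‖ ^ 3 / 4) ≤ β * D * (s * u) ^ 3 * (1 + R) ^ 3 := by
      have : u ≤ u ^ 3 := le_self_pow₀ hu (by norm_num)
      calc β * (D * u * ‖z - x‖ ^ 3 / 4) ≤ β * (D * u * ‖z - x‖ ^ 3) := by
            have : 0 ≤ D * u * ‖z - x‖ ^ 3 := by positivity
            gcongr; linarith
        _ ≤ β * (D * u ^ 3 * (s * (1 + R)) ^ 3) := by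
            gcongr
            refine hR.trans ?_
            gcongr
            linarith
        _ = _ := by ring
    have k2 : β * s ^ 2 / 4 * (2 * (D * u) ^ 2 * ‖z - x‖) ≤ β * D ^ 2 * (s * u) ^ 3 * (1 + R) ^ 3 := by
      have : u ^ 2 ≤ u ^ 3 := pow_le_pow_right₀ hu (by norm_num)
      have e : R ≤ (1 + R) ^ 3 := by nlinarith [sq_nonneg R, pow_nonneg hR0 3]
      calc β * s ^ 2 / 4 * (2 * (D * u) ^ 2 * ‖z - x‖)
          ≤ β * s ^ 2 / 4 * (2 * (D * u) ^ 2 * (s * R)) := by gcongr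
        _ = β * D ^ 2 * s ^ 3 * (u ^ 2) * R / 2 := by ring
        _ ≤ β * D ^ 2 * s ^ 3 * (u ^ 2) * R := by
            have : 0 ≤ β * D ^ 2 * s ^ 3 * (u ^ 2) * R := by positivity
            linarith
        _ ≤ β * D ^ 2 * s ^ 3 * (u ^ 3) * (1 + R) ^ 3 := by gcongr
        _ = _ := by ring
    linarith
  have h7 : |FF U θ x z - 1| ≤ θ * D * (s * u) * (1 + R) * exp (θ * D * R) := by
    refine h3.trans ?_
    have : θ * D * (s * u) * R ≤ θ * D * (s * u) * (1 + R) := by gcongr; linarith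
    gcongr
    exact h4.trans this
  have h8 : |1 - accept n β (s ^ 2) U x z| * |FF U θ x z - 1| ≤
      (β * (D + D ^ 2) * (s * u) ^ 3 * (1 + R) ^ 3) *
      (θ * D * (s * u) * (1 + R) * exp (θ * D * R)) := by
    gcongr
    exact h1.trans h6
  have h9 := neg_abs_le ((1 - accept n β (s ^ 2) U x z) * (FF U θ x z - 1))
  rw [abs_mul] at h9
  calc _ = (FF U θ x z - 1) - (1 - accept n β (s ^ 2) U x z) * (FF U θ x z - 1) := by ring
    _ ≤ (FF U θ x z - 1) + (β * (D + D ^ 2) * (s * u) ^ 3 * (1 + R) ^ 3) *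
      (θ * D * (s * u) * (1 + R) * exp (θ * D * R)) := by linarith
    _ = _ := by ring

lemma near_taylor (P : Pot n U C) (hθ : 0 < θ) (hs : 0 < s) (hs1 : s < 1) (hsu : s * U x ≤ 1)
    {ξ : Euc n} (hξ : s * ‖ξ‖ ≤ 1) :
    FF U θ x (pm U s x + s • ξ) + FF U θ x (pm U s x + s • (-ξ)) ≤
      2 * (FF U θ x (pm U s x) * (1 + s ^ 2 / 2 * q2 U θ (pm U s x) ξ)) +
      (θ * Pot.D C + 7 * (θ * Pot.D C) ^ 2 + 6 * (θ * Pot.D C) ^ 3 + (θ * Pot.D C) ^ 4) / 12 *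
        (s * U x) ^ 4 * ((1 + (‖ξ‖ + C)) ^ 4 * exp (θ * Pot.D C * (‖ξ‖ + C))) := by
  have hD := P.D_pos
  have hC := P.C_pos
  have hu := P.one_le x
  set u := U x with hu_def
  set D := Pot.D C with hD_def
  set m := pm U s x with hm
  set w := s • ξ with hw
  have hwn : ‖w‖ = s * ‖ξ‖ := by rw [hw, norm_smul, norm_of_nonneg hs.le]
  have hloc : ∀ t ∈ Set.Icc (-1:ℝ) 1, ‖m + t • w - x‖ ≤ s * (‖ξ‖ + C) := by
    intro t ht
    refine (pm_dist P hs hsu (t • w)).trans ?_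
    rw [norm_smul, hwn, norm_eq_abs]
    have : |t| ≤ 1 := abs_le.2 ht
    have : |t| * (s * ‖ξ‖) ≤ 1 * (s * ‖ξ‖) := by gcongr
    linarith
  have hloc' : ∀ t ∈ Set.Icc (-1:ℝ) 1, ‖m + t • w - x‖ ≤ 1 + C := by
    intro t ht
    have h1 := hloc t ht
    have h2 : s * C ≤ 1 * C := by gcongr
    linarith
  have hk : ∀ k, 1 ≤ k → k ≤ 4 → ∀ t ∈ Set.Icc (-1:ℝ) 1,
      |θ * Dk U k (m + t • w) w| ≤ θ * D * u * (s * ‖ξ‖) ^ k := by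
    intro k h1 h4 t ht
    rw [abs_mul, abs_of_pos hθ, ← hwn]
    have := P.Dk_loc (hloc' t ht) h1 h4 w
    calc θ * |Dk U k (m + t • w) w| ≤ θ * (D * u * ‖w‖ ^ k) := by gcongr
      _ = _ := by ring
  have key := sym_taylor_exp (f := fun t => θ * (U (m + t • w) - u))
    (f1 := fun t => θ * Dk U 1 (m + t • w) w) (f2 := fun t => θ * Dk U 2 (m + t • w) w)
    (f3 := fun t => θ * Dk U 3 (m + t • w) w) (f4 := fun t => θ * Dk U 4 (m + t • w) w)
    (fun t => ((P.line0 m w t).sub_const u).const_mul θ)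
    (fun t => (Dk_hasDerivAt P.smooth (k := 1) (by norm_num) m w t).const_mul θ)
    (fun t => (Dk_hasDerivAt P.smooth (k := 2) (by norm_num) m w t).const_mul θ)
    (fun t => (Dk_hasDerivAt P.smooth (k := 3) (by norm_num) m w t).const_mul θ)
    (a := θ * D * u) (q := s * ‖ξ‖) (b := θ * D * (‖ξ‖ + C)) (by positivity) (by positivity)
    (fun t ht => (le_abs_self _).trans
      (delta_bound' P hθ hs hsu (by positivity) (hloc' t ht) (hloc t ht)))
    (hk 1 (by norm_num) (by norm_num)) (hk 2 (by norm_num) (by norm_num))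
    (hk 3 (by norm_num) (by norm_num)) (hk 4 (by norm_num) (by norm_num))
  simp only [one_smul, zero_smul, add_zero, neg_smul] at key
  have hq : θ * Dk U 2 m w + (θ * Dk U 1 m w) ^ 2 = s ^ 2 * q2 U θ m ξ := by
    rw [Dk_one]
    have e : Dk U 2 m w = s ^ 2 * D2 U m ξ ξ := by
      rw [← Dk_two]
      unfold Dk
      have := (iteratedFDeriv ℝ 2 U m).map_smul_univ (fun _ => s) (fun _ => ξ)
      simpa [hw] using this
    rw [e, hw, inner_smul_right, q2]
    ring
  rw [hq] at key
  rw [smul_neg]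
  have hrem : (θ * D * u + 7 * (θ * D * u) ^ 2 + 6 * (θ * D * u) ^ 3 + (θ * D * u) ^ 4) *
      (s * ‖ξ‖) ^ 4 ≤ (θ * D + 7 * (θ * D) ^ 2 + 6 * (θ * D) ^ 3 + (θ * D) ^ 4) *
      (s * u) ^ 4 * (1 + (‖ξ‖ + C)) ^ 4 := by
    have p1 : u ≤ u ^ 4 := le_self_pow₀ hu (by norm_num)
    have p2 : u ^ 2 ≤ u ^ 4 := pow_le_pow_right₀ hu (by norm_num)
    have p3 : u ^ 3 ≤ u ^ 4 := pow_le_pow_right₀ hu (by norm_num)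
    have hκ : 0 < θ * D := by positivity
    have hsum : θ * D * u + 7 * (θ * D * u) ^ 2 + 6 * (θ * D * u) ^ 3 + (θ * D * u) ^ 4 ≤
        (θ * D + 7 * (θ * D) ^ 2 + 6 * (θ * D) ^ 3 + (θ * D) ^ 4) * u ^ 4 := by
      calc _ = θ * D * u + 7 * (θ * D) ^ 2 * u ^ 2 + 6 * (θ * D) ^ 3 * u ^ 3
            + (θ * D) ^ 4 * u ^ 4 := by ring
        _ ≤ θ * D * u ^ 4 + 7 * (θ * D) ^ 2 * u ^ 4 + 6 * (θ * D) ^ 3 * u ^ 4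
            + (θ * D) ^ 4 * u ^ 4 := by gcongr
        _ = _ := by ring
    have hx : ‖ξ‖ ≤ 1 + (‖ξ‖ + C) := by linarith
    calc _ ≤ (θ * D + 7 * (θ * D) ^ 2 + 6 * (θ * D) ^ 3 + (θ * D) ^ 4) * u ^ 4 *
          (s * (1 + (‖ξ‖ + C))) ^ 4 := by gcongr
      _ = _ := by ring
  have hrem2 := mul_le_mul_of_nonneg_left hrem (exp_pos (θ * D * (‖ξ‖ + C))).le
  unfold FF
  linarith

end pointwise

section pointwise2

variable {n : ℕ} {U : Euc n → ℝ} {C β θ s : ℝ} {x : Euc n}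

/-- Constant in the pointwise estimate. -/
def KK (β θ C : ℝ) : ℝ :=
  β * (Pot.D C + Pot.D C ^ 2) * (θ * Pot.D C) +
  (θ * Pot.D C + 7 * (θ * Pot.D C) ^ 2 + 6 * (θ * Pot.D C) ^ 3 + (θ * Pot.D C) ^ 4) / 24 +
  (2 + θ * Pot.D C + (θ * Pot.D C) ^ 2)

/-- Increment integrand. -/
def HH (U : Euc n → ℝ) (β θ s : ℝ) (x ξ : Euc n) : ℝ :=
  accept n β (s ^ 2) U x (pm U s x + s • ξ) * (FF U θ x (pm U s x + s • ξ) - 1)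

lemma pm_shift (ξ : Euc n) : pm U s x + s • ξ - x + s ^ 2 • gradient U x = s • ξ := by
  unfold pm; abel

lemma acc_FF_le (hβ : 0 < β) (hθ : 0 < θ) (hθ2 : θ ≤ β / 2) (hs : 0 < s) (ξ : Euc n) :
    accept n β (s ^ 2) U x (pm U s x + s • ξ) * FF U θ x (pm U s x + s • ξ) ≤
      exp (β / 8 * ‖ξ‖ ^ 2) := by
  have := accept_mul_exp (h := s ^ 2) hβ (pow_pos hs 2) hθ.le hθ2 U x (pm U s x + s • ξ)
  rw [pm_shift, norm_smul, norm_of_nonneg hs.le] at this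
  refine this.trans (le_of_eq ?_)
  congr 1
  field_simp

lemma HH_le (hβ : 0 < β) (hθ : 0 < θ) (hθ2 : θ ≤ β / 2) (hs : 0 < s) (ξ : Euc n) :
    HH U β θ s x ξ ≤ exp (β / 8 * ‖ξ‖ ^ 2) := by
  have h1 := acc_FF_le (U := U) (x := x) hβ hθ hθ2 hs ξ
  have h2 := accept_nonneg (h := s ^ 2) hβ (pow_pos hs 2) U x (pm U s x + s • ξ)
  unfold HH
  linarith

lemma q2_bound (P : Pot n U C) (hθ : 0 < θ) {m ξ : Euc n} (hm : ‖m - x‖ ≤ 1 + C) :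
    |q2 U θ m ξ| ≤ (θ * Pot.D C + (θ * Pot.D C) ^ 2) * U x ^ 2 * ‖ξ‖ ^ 2 := by
  have hD := P.D_pos
  have hu := P.one_le x
  have h2 := P.Dk_loc hm (k := 2) (by norm_num) (by norm_num) ξ
  have h1 := P.Dk_loc hm (k := 1) (by norm_num) (by norm_num) ξ
  rw [Dk_two] at h2
  rw [Dk_one, pow_one] at h1
  unfold q2
  refine (abs_add_le _ _).trans ?_
  rw [abs_mul, abs_mul, abs_pow, abs_pow, abs_of_pos hθ]
  have p : U x ≤ U x ^ 2 := le_self_pow₀ hu (by norm_num)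
  calc θ * |D2 U m ξ ξ| + θ ^ 2 * |inner ℝ (gradient U m) ξ| ^ 2
      ≤ θ * (Pot.D C * U x * ‖ξ‖ ^ 2) + θ ^ 2 * (Pot.D C * U x * ‖ξ‖) ^ 2 := by gcongr
    _ ≤ θ * (Pot.D C * U x ^ 2 * ‖ξ‖ ^ 2) + θ ^ 2 * (Pot.D C * U x * ‖ξ‖) ^ 2 := by gcongr
    _ = _ := by ring

set_option maxHeartbeats 1000000 in
lemma pointwise (P : Pot n U C) (hβ : 0 < β) (hθ : 0 < θ) (hθ2 : θ ≤ β / 2) (hs : 0 < s)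
    (hs1 : s < 1) (hsu : s * U x ≤ 1) (ξ : Euc n) :
    exp (-(β / 4) * ‖ξ‖ ^ 2) * ((HH U β θ s x ξ + HH U β θ s x (-ξ)) / 2) ≤
      exp (-(β / 4) * ‖ξ‖ ^ 2) *
        (FF U θ x (pm U s x) * (1 + s ^ 2 / 2 * q2 U θ (pm U s x) ξ) - 1) +
      KK β θ C * (s * U x) ^ 4 * ((1 + (‖ξ‖ + C)) ^ 4 * exp (θ * Pot.D C * (‖ξ‖ + C)) *
        exp (-(β / 8) * ‖ξ‖ ^ 2)) := by
  have hD := P.D_pos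
  have hC := P.C_pos
  have hu := P.one_le x
  have hu0 : 0 < U x := by linarith
  have hκ : 0 < θ * Pot.D C := by positivity
  have hsC : s * C ≤ 1 * C := by gcongr
  set κ := θ * Pot.D C with hκd
  set K1 := β * (Pot.D C + Pot.D C ^ 2) * κ with hK1
  have hK1p : 0 < K1 := by positivity
  set K2 := κ + 7 * κ ^ 2 + 6 * κ ^ 3 + κ ^ 4 with hK2
  have hK2p : 0 < K2 := by positivity
  set r := ‖ξ‖ with hr
  have hr0 : 0 ≤ r := norm_nonneg _
  set W := (1 + (r + C)) ^ 4 * exp (κ * (r + C)) with hW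
  have hWp : 0 < W := by positivity
  set g := exp (-(β / 4) * r ^ 2) with hg
  set g8 := exp (-(β / 8) * r ^ 2) with hg8
  have hgp : 0 < g := exp_pos _
  have hg8p : 0 < g8 := exp_pos _
  have hgg : g ≤ g8 := exp_le_exp.2 (by nlinarith [sq_nonneg r])
  have hKK : KK β θ C = K1 + K2 / 24 + (2 + κ + κ ^ 2) := by
    rw [KK, ← hκd]
  set ε := s * U x with hε
  have hεp : 0 < ε := by positivity
  set ρ := FF U θ x (pm U s x) with hρ
  have hρp : 0 < ρ := exp_pos _
  have hmx : ‖pm U s x - x‖ ≤ s * C := by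
    have := pm_dist P hs hsu (0 : Euc n)
    simpa using this
  rcases le_or_gt (s * r) 1 with hnear | hfar
  · have hnr : ∀ η : Euc n, ‖η‖ = r → ‖pm U s x + s • η - x‖ ≤ s * (r + C) := by
      intro η hη
      refine (pm_dist P hs hsu _).trans ?_
      rw [norm_smul, hη, norm_of_nonneg hs.le]
      linarith
    have a1 := acc_err (β := β) (θ := θ) P hβ hθ hs hsu (z := pm U s x + s • ξ) (R := r + C)
      (by positivity) (by linarith [hnr ξ rfl]) (hnr ξ rfl)
    have a2 := acc_err (β := β) (θ := θ) P hβ hθ hs hsu (z := pm U s x + s • (-ξ)) (R := r + C)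
      (by positivity) (by linarith [hnr (-ξ) (norm_neg ξ)]) (hnr (-ξ) (norm_neg ξ))
    have a3 := near_taylor P hθ hs hs1 hsu hnear
    rw [← hκd, ← hε, ← hW] at a1 a2
    rw [← hκd, ← hε, ← hr, ← hW] at a3
    have b1 : (HH U β θ s x ξ + HH U β θ s x (-ξ)) / 2 ≤
        (ρ * (1 + s ^ 2 / 2 * q2 U θ (pm U s x) ξ) - 1) + (K1 + K2 / 24) * ε ^ 4 * W := by
      unfold HH
      linarith
    have b2 : g * ((K1 + K2 / 24) * ε ^ 4 * W) ≤ g8 * (KK β θ C * ε ^ 4 * W) := by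
      have : K1 + K2 / 24 ≤ KK β θ C := by
        have hk2 := sq_nonneg κ
        rw [hKK]; linarith
      gcongr
    have b3 := mul_le_mul_of_nonneg_left b1 hgp.le
    linarith
  · have hsr : 1 ≤ s * r := hfar.le
    have h1 := HH_le (U := U) (x := x) hβ hθ hθ2 hs ξ
    have h2 := HH_le (U := U) (x := x) hβ hθ hθ2 hs (-ξ)
    rw [norm_neg] at h2
    rw [← hr] at h1 h2
    have hge : g * exp (β / 8 * r ^ 2) = g8 := by
      rw [hg, hg8, ← exp_add]; congr 1; ring
    have hεr : s * r ≤ ε * r := by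
      have : s ≤ ε := le_mul_of_one_le_right hs.le hu
      exact mul_le_mul_of_nonneg_right this hr0
    have hE1 : 1 ≤ (ε * r) ^ 4 := one_le_pow₀ (hsr.trans hεr)
    have hWr : r ^ 4 * exp (κ * (r + C)) ≤ W := by
      rw [hW]; gcongr; linarith
    have heW : 1 ≤ exp (κ * (r + C)) := one_le_exp (by positivity)
    have hE2 : (ε * r) ^ 4 * exp (κ * (r + C)) ≤ ε ^ 4 * W := by
      calc _ = ε ^ 4 * (r ^ 4 * exp (κ * (r + C))) := by ring
        _ ≤ _ := by gcongr
    have hE3 : 1 ≤ ε ^ 4 * W := by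
      exact le_trans (one_le_mul_of_one_le_of_one_le hE1 heW) hE2
    have hρ2 : ρ ≤ exp (κ * (r + C)) := by
      rw [hρ, FF]
      refine exp_le_exp.2 ((le_abs_self _).trans ?_)
      exact delta_bound' P hθ hs hsu (by positivity) (by linarith)
        (hmx.trans (by gcongr; linarith))
    have hq := q2_bound P hθ (x := x) (m := pm U s x) (ξ := ξ) (by linarith)
    rw [← hκd, ← hr] at hq
    have hq2 : s ^ 2 / 2 * |q2 U θ (pm U s x) ξ| ≤ (κ + κ ^ 2) * (ε * r) ^ 4 := by
      calc s ^ 2 / 2 * |q2 U θ (pm U s x) ξ| ≤ s ^ 2 / 2 * ((κ + κ ^ 2) * U x ^ 2 * r ^ 2) := by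
            gcongr
        _ = (κ + κ ^ 2) * ((ε * r) ^ 2 * 1) / 2 := by rw [hε]; ring
        _ ≤ (κ + κ ^ 2) * ((ε * r) ^ 2 * 1) := by
            have : 0 ≤ (κ + κ ^ 2) * ((ε * r) ^ 2 * 1) := by positivity
            linarith
        _ ≤ (κ + κ ^ 2) * ((ε * r) ^ 2 * (ε * r) ^ 2) := by
            gcongr
            exact one_le_pow₀ (hsr.trans hεr)
        _ = _ := by ring
    have hQ : -(ρ * (1 + s ^ 2 / 2 * q2 U θ (pm U s x) ξ) - 1) ≤ (1 + κ + κ ^ 2) * (ε ^ 4 * W) := by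
      have k1 : -(s ^ 2 / 2 * q2 U θ (pm U s x) ξ) ≤ (κ + κ ^ 2) * (ε * r) ^ 4 := by
        have := neg_abs_le (q2 U θ (pm U s x) ξ)
        have h3 : s ^ 2 / 2 * (-|q2 U θ (pm U s x) ξ|) ≤ s ^ 2 / 2 * q2 U θ (pm U s x) ξ := by
          gcongr
        linarith
      have k2 : ρ * (-(s ^ 2 / 2 * q2 U θ (pm U s x) ξ)) ≤ (κ + κ ^ 2) * (ε ^ 4 * W) := by
        calc _ ≤ ρ * ((κ + κ ^ 2) * (ε * r) ^ 4) := by gcongr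
          _ ≤ exp (κ * (r + C)) * ((κ + κ ^ 2) * (ε * r) ^ 4) := by gcongr
          _ = (κ + κ ^ 2) * ((ε * r) ^ 4 * exp (κ * (r + C))) := by ring
          _ ≤ _ := by gcongr
      linarith
    have c1 : g * ((HH U β θ s x ξ + HH U β θ s x (-ξ)) / 2) ≤ g8 := by
      rw [← hge]
      gcongr
      linarith
    have c2 : g8 ≤ g8 * (ε ^ 4 * W) := le_mul_of_one_le_right hg8p.le hE3
    have c3 : g * (-(ρ * (1 + s ^ 2 / 2 * q2 U θ (pm U s x) ξ) - 1)) ≤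
        g8 * ((1 + κ + κ ^ 2) * (ε ^ 4 * W)) := by
      refine (mul_le_mul_of_nonneg_left hQ hgp.le).trans ?_
      gcongr
    have c4 : 0 ≤ (K1 + K2 / 24) * (g8 * (ε ^ 4 * W)) := by positivity
    rw [hKK]
    linarith

/-- The polynomial-exponential weight is dominated by a Gaussian. -/
lemma weight_bound (hβ : 0 < β) {κ : ℝ} (hκ : 0 < κ) (hC : 0 < C) :
    ∃ K > 0, ∀ r : ℝ, 0 ≤ r → (1 + (r + C)) ^ 4 * exp (κ * (r + C)) *
        exp (-(β / 8) * r ^ 2) ≤ K * exp (-(β / 16) * r ^ 2) := by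
  refine ⟨exp ((4 + κ) * (1 + C) + 4 * (4 + κ) ^ 2 / β), exp_pos _, fun r hr => ?_⟩
  have h1 : (1 + (r + C)) ^ 4 ≤ exp (4 * (1 + (r + C))) := by
    have : 1 + (r + C) ≤ exp (1 + (r + C)) := by linarith [add_one_le_exp (1 + (r + C))]
    calc (1 + (r + C)) ^ 4 ≤ exp (1 + (r + C)) ^ 4 := by gcongr
      _ = _ := by rw [← exp_nat_mul]; norm_num
  calc _ ≤ exp (4 * (1 + (r + C))) * exp (κ * (r + C)) * exp (-(β / 8) * r ^ 2) := by gcongr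
    _ ≤ _ := by
      rw [← exp_add, ← exp_add, ← exp_add]
      refine exp_le_exp.2 ?_
      have : (4 + κ) * r ≤ 4 * (4 + κ) ^ 2 / β + β / 16 * r ^ 2 := by
        have h : 4 * (4 + κ) ^ 2 / β + β / 16 * r ^ 2 - (4 + κ) * r
            = (8 * (4 + κ) - β * r) ^ 2 / (16 * β) := by
          field_simp
          ring
        have : 0 ≤ (8 * (4 + κ) - β * r) ^ 2 / (16 * β) := by positivity
        linarith
      nlinarith

end pointwise2

section integrated

variable {n : ℕ} {U : Euc n → ℝ} {C β θ s : ℝ} {x : Euc n}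

lemma cont_grad (P : Pot n U C) : Continuous (gradient U) := by
  have h : Continuous (fderiv ℝ U) := P.smooth.continuous_fderiv (by norm_num)
  exact (InnerProductSpace.toDual ℝ (Euc n)).symm.continuous.comp h

lemma cont_accept (P : Pot n U C) (hβ : 0 < β) {h : ℝ} (hh : 0 < h) (x : Euc n) :
    Continuous (fun y => accept n β h U x y) := by
  have h1 := cont_grad P
  have h2 := P.smooth.continuous
  have : (fun y => accept n β h U x y) = fun y => min 1 (exp (logR β h U x y)) := by
    ext y; exact accept_eq hβ hh U x y
  rw [this]
  unfold logR
  fun_prop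

lemma cont_HH (P : Pot n U C) (hβ : 0 < β) (hs : 0 < s) : Continuous (HH U β θ s x) := by
  have h1 := cont_accept P hβ (pow_pos hs 2) x
  have h2 := P.smooth.continuous
  have h3 : Continuous (fun ξ : Euc n => pm U s x + s • ξ) := by fun_prop
  have h4 := h1.comp h3
  have h5 := h2.comp h3
  unfold HH FF
  exact h4.mul (Real.continuous_exp.comp (continuous_const.mul (h5.sub continuous_const)) |>.sub
    continuous_const)

/-- Normalisation of the Euler density. -/
def NN (n : ℕ) (β s : ℝ) : ℝ := (4 * π * β⁻¹ * s ^ 2) ^ (-(n : ℝ) / 2)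

lemma euler_shift (hβ : 0 < β) (hs : 0 < s) (ξ : Euc n) :
    eulerDensity n β (s ^ 2) U x (pm U s x + s • ξ) = NN n β s * exp (-(β / 4) * ‖ξ‖ ^ 2) := by
  unfold eulerDensity NN
  rw [pm_shift, norm_smul, norm_of_nonneg hs.le]
  congr 2
  field_simp

lemma NN_norm (n : ℕ) (hβ : 0 < β) (hs : 0 < s) :
    s ^ n * NN n β s * ∫ ξ : Euc n, exp (-(β / 4) * ‖ξ‖ ^ 2) = 1 := by
  rw [GaussianFourier.integral_rexp_neg_mul_sq_norm (by positivity)]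
  simp only [finrank_euclideanSpace, Fintype.card_fin, NN]
  have e1 : (4 * π * β⁻¹ * s ^ 2) = π / (β / 4) * s ^ 2 := by field_simp
  have hp : 0 < π / (β / 4) := by positivity
  rw [e1, mul_rpow hp.le (by positivity), neg_div, rpow_neg hp.le, rpow_neg (by positivity)]
  have e2 : (s ^ 2) ^ ((n : ℝ) / 2) = s ^ n := by
    rw [← rpow_natCast s 2, ← rpow_mul hs.le, ← rpow_natCast s n]
    congr 1
    push_cast
    ring
  rw [e2]
  have : (π / (β / 4)) ^ ((n : ℝ) / 2) ≠ 0 := (rpow_pos_of_pos hp _).ne'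
  have hsn : s ^ n ≠ 0 := (pow_pos hs n).ne'
  field_simp

lemma int_exp_accept (P : Pot n U C) (hβ : 0 < β) (hθ : 0 < θ) (hθ2 : θ ≤ β / 2) (hs : 0 < s) :
    Integrable (fun y => accept n β (s ^ 2) U x y * eulerDensity n β (s ^ 2) U x y *
      exp (θ * U y)) := by
  apply change_var_integrable n _ (pm U s x) hs
  have h1 := cont_accept P hβ (pow_pos hs 2) x
  have h2 := P.smooth.continuous
  have h3 : Continuous (fun ξ : Euc n => pm U s x + s • ξ) := by fun_prop
  have h4 := h1.comp h3
  have h5 := h2.comp h3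
  have hN : 0 < NN n β s := by unfold NN; positivity
  simp_rw [euler_shift hβ hs]
  refine Integrable.mono' ((gauss_integrable n (b := β / 8) (by positivity)).const_mul
    (NN n β s * exp (θ * U x))) ?_ ?_
  · apply Continuous.aestronglyMeasurable
    refine (h4.mul (by fun_prop)).mul ?_
    exact Real.continuous_exp.comp (continuous_const.mul h5)
  · refine ae_of_all _ fun ξ => ?_
    have ha := accept_nonneg (h := s ^ 2) hβ (pow_pos hs 2) U x (pm U s x + s • ξ)
    have hb := acc_FF_le (U := U) (x := x) hβ hθ hθ2 hs ξ
    rw [norm_of_nonneg (by positivity)]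
    have e1 : exp (θ * U (pm U s x + s • ξ)) = exp (θ * U x) * FF U θ x (pm U s x + s • ξ) := by
      rw [FF, ← exp_add]; congr 1; ring
    have e2 : exp (-(β / 8) * ‖ξ‖ ^ 2) = exp (-(β / 4) * ‖ξ‖ ^ 2) * exp (β / 8 * ‖ξ‖ ^ 2) := by
      rw [← exp_add]; congr 1; ring
    rw [e1, e2]
    calc _ = NN n β s * exp (θ * U x) * (exp (-(β / 4) * ‖ξ‖ ^ 2) *
          (accept n β (s ^ 2) U x (pm U s x + s • ξ) * FF U θ x (pm U s x + s • ξ))) := by ring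
      _ ≤ _ := by gcongr

lemma int_accept (P : Pot n U C) (hβ : 0 < β) (hs : 0 < s) :
    Integrable (fun y => accept n β (s ^ 2) U x y * eulerDensity n β (s ^ 2) U x y) := by
  apply change_var_integrable n _ (pm U s x) hs
  have h1 := cont_accept P hβ (pow_pos hs 2) x
  have h3 : Continuous (fun ξ : Euc n => pm U s x + s • ξ) := by fun_prop
  have h4 := h1.comp h3
  have hN : 0 < NN n β s := by unfold NN; positivity
  simp_rw [euler_shift hβ hs]
  refine Integrable.mono' ((gauss_integrable n (b := β / 4) (by positivity)).const_mul
    (NN n β s)) ?_ ?_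
  · apply Continuous.aestronglyMeasurable
    exact h4.mul (by fun_prop)
  · refine ae_of_all _ fun ξ => ?_
    have ha := accept_nonneg (h := s ^ 2) hβ (pow_pos hs 2) U x (pm U s x + s • ξ)
    have hb := accept_le_one β (s ^ 2) U x (pm U s x + s • ξ)
    rw [norm_of_nonneg (by positivity)]
    exact mul_le_of_le_one_left (by positivity) hb

lemma drift_eq (P : Pot n U C) (hβ : 0 < β) (hθ : 0 < θ) (hθ2 : θ ≤ β / 2) (hs : 0 < s) :
    (∫ y, accept n β (s ^ 2) U x y * eulerDensity n β (s ^ 2) U x y * exp (θ * U y))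
      + (1 - ∫ y, accept n β (s ^ 2) U x y * eulerDensity n β (s ^ 2) U x y) * exp (θ * U x)
    = exp (θ * U x) * (1 + s ^ n * NN n β s *
        ∫ ξ : Euc n, exp (-(β / 4) * ‖ξ‖ ^ 2) * HH U β θ s x ξ) := by
  have i1 := int_exp_accept (x := x) P hβ hθ hθ2 hs
  have i2 := int_accept (x := x) P hβ hs
  have e : (∫ y, accept n β (s ^ 2) U x y * eulerDensity n β (s ^ 2) U x y * exp (θ * U y))
      - (∫ y, accept n β (s ^ 2) U x y * eulerDensity n β (s ^ 2) U x y) * exp (θ * U x)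
      = s ^ n * NN n β s * exp (θ * U x) *
        ∫ ξ : Euc n, exp (-(β / 4) * ‖ξ‖ ^ 2) * HH U β θ s x ξ := by
    rw [← integral_mul_const, ← integral_sub i1 (i2.mul_const _),
      change_var n _ (pm U s x) hs, mul_assoc (s ^ n), mul_assoc (s ^ n),
      ← integral_const_mul (NN n β s * exp (θ * U x))]
    congr 1
    refine integral_congr_ae (ae_of_all _ fun ξ => ?_)
    simp only [euler_shift hβ hs, HH]
    have e1 : exp (θ * U (pm U s x + s • ξ)) = exp (θ * U x) * FF U θ x (pm U s x + s • ξ) := by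
      rw [FF, ← exp_add]; congr 1; ring
    rw [e1]
    ring
  linarith

lemma HH_integrable (P : Pot n U C) (hβ : 0 < β) (hθ : 0 < θ) (hθ2 : θ ≤ β / 2) (hs : 0 < s) :
    Integrable (fun ξ : Euc n => exp (-(β / 4) * ‖ξ‖ ^ 2) * HH U β θ s x ξ) := by
  have hc := cont_HH (θ := θ) (x := x) P hβ hs
  refine Integrable.mono' (gauss_integrable n (b := β / 8) (by positivity)) ?_ ?_
  · apply Continuous.aestronglyMeasurable
    fun_prop
  · refine ae_of_all _ fun ξ => ?_
    have ha := accept_nonneg (h := s ^ 2) hβ (pow_pos hs 2) U x (pm U s x + s • ξ)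
    have ha1 := accept_le_one β (s ^ 2) U x (pm U s x + s • ξ)
    have hF : 0 < FF U θ x (pm U s x + s • ξ) := exp_pos _
    have hb := HH_le (U := U) (x := x) hβ hθ hθ2 hs ξ
    have he : (1:ℝ) ≤ exp (β / 8 * ‖ξ‖ ^ 2) := one_le_exp (by positivity)
    have hl : -1 ≤ HH U β θ s x ξ := by
      have := mul_nonneg ha hF.le
      unfold HH
      linarith
    have e2 : exp (-(β / 8) * ‖ξ‖ ^ 2) = exp (-(β / 4) * ‖ξ‖ ^ 2) * exp (β / 8 * ‖ξ‖ ^ 2) := by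
      rw [← exp_add]; congr 1; ring
    rw [e2, norm_mul, norm_of_nonneg (exp_pos _).le]
    gcongr
    rw [norm_eq_abs]
    exact abs_le.2 ⟨by linarith, hb⟩

/-- bilinear form behind `q2`. -/
def BB (U : Euc n → ℝ) (θ : ℝ) (m : Euc n) : Euc n →L[ℝ] Euc n →L[ℝ] ℝ :=
  θ • fderiv ℝ (fderiv ℝ U) m +
    θ ^ 2 • ContinuousLinearMap.smulRight (innerSL ℝ (gradient U m)) (innerSL ℝ (gradient U m))

lemma BB_apply (m ξ : Euc n) : BB U θ m ξ ξ = q2 U θ m ξ := by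
  unfold BB q2 D2
  rw [iteratedFDeriv_two_apply]
  simp [sq]

lemma BB_trace (m : Euc n) :
    (∑ i, BB U θ m (EuclideanSpace.single i 1) (EuclideanSpace.single i 1)) =
      θ * lapl U m + θ ^ 2 * ‖gradient U m‖ ^ 2 := by
  simp_rw [BB_apply, q2]
  rw [Finset.sum_add_distrib, ← Finset.mul_sum, ← Finset.mul_sum, lapl, EuclideanSpace.norm_sq_eq]
  congr 3
  ext i
  rw [EuclideanSpace.inner_single_right]
  simp

lemma drift_le (P : Pot n U C) (hβ : 0 < β) (hθ : 0 < θ) (hθ2 : θ ≤ β / 2) :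
    ∃ K > 0, ∀ s : ℝ, 0 < s → s < 1 → ∀ x : Euc n, s * U x ≤ 1 →
    (∫ y, accept n β (s ^ 2) U x y * eulerDensity n β (s ^ 2) U x y * exp (θ * U y))
      + (1 - ∫ y, accept n β (s ^ 2) U x y * eulerDensity n β (s ^ 2) U x y) * exp (θ * U x)
    ≤ exp (θ * U x) * (FF U θ x (pm U s x) * (1 + s ^ 2 / β * (θ * lapl U (pm U s x) +
        θ ^ 2 * ‖gradient U (pm U s x)‖ ^ 2)) + K * (s * U x) ^ 4) := by
  have hD := P.D_pos
  have hκ : 0 < θ * Pot.D C := by positivity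
  obtain ⟨K', hK', hw⟩ := weight_bound (C := C) hβ hκ P.C_pos
  have hb4 : 0 < β / 4 := by positivity
  have hKK : 0 < KK β θ C := by unfold KK; positivity
  set I0 := ∫ ξ : Euc n, exp (-(β / 4) * ‖ξ‖ ^ 2) with hI0
  set I1 := ∫ ξ : Euc n, exp (-(β / 16) * ‖ξ‖ ^ 2) with hI1
  have hI0p : 0 < I0 := by
    rw [hI0, GaussianFourier.integral_rexp_neg_mul_sq_norm hb4]; positivity
  have hI1p : 0 < I1 := by
    rw [hI1, GaussianFourier.integral_rexp_neg_mul_sq_norm (by positivity)]; positivity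
  refine ⟨KK β θ C * K' * I1 / I0, by positivity, fun s hs hs1 x hsu => ?_⟩
  rw [drift_eq P hβ hθ hθ2 hs]
  refine mul_le_mul_of_nonneg_left ?_ (exp_pos _).le
  have hA : s ^ n * NN n β s = 1 / I0 := by
    rw [eq_div_iff hI0p.ne']; exact NN_norm n hβ hs
  rw [hA]
  set ρ := FF U θ x (pm U s x) with hρ
  set m := pm U s x with hm
  set Z := θ * lapl U m + θ ^ 2 * ‖gradient U m‖ ^ 2 with hZ
  have hH := HH_integrable (x := x) P hβ hθ hθ2 hs
  have hHn := hH.comp_neg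
  have hsym : ∫ ξ : Euc n, exp (-(β / 4) * ‖ξ‖ ^ 2) * HH U β θ s x ξ =
      ∫ ξ : Euc n, exp (-(β / 4) * ‖ξ‖ ^ 2) * ((HH U β θ s x ξ + HH U β θ s x (-ξ)) / 2) := by
    have h1 := integral_neg_eq_self
      (fun ξ : Euc n => exp (-(β / 4) * ‖ξ‖ ^ 2) * HH U β θ s x ξ) volume
    have h2 := integral_add hH hHn
    rw [h1] at h2
    have h3 : ∫ ξ : Euc n, exp (-(β / 4) * ‖ξ‖ ^ 2) * ((HH U β θ s x ξ + HH U β θ s x (-ξ)) / 2)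
        = 1 / 2 * ∫ ξ : Euc n, (exp (-(β / 4) * ‖ξ‖ ^ 2) * HH U β θ s x ξ +
          exp (-(β / 4) * ‖-ξ‖ ^ 2) * HH U β θ s x (-ξ)) := by
      rw [← integral_const_mul]
      refine integral_congr_ae (ae_of_all _ fun ξ => ?_)
      simp only [norm_neg]
      ring
    rw [h3, h2]
    ring
  have hHs : Integrable (fun ξ : Euc n =>
      exp (-(β / 4) * ‖ξ‖ ^ 2) * ((HH U β θ s x ξ + HH U β θ s x (-ξ)) / 2)) := by
    refine ((hH.add hHn).const_mul (1 / 2)).congr (ae_of_all _ fun ξ => ?_)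
    simp only [norm_neg, Pi.add_apply]
    ring
  have j1 := (gauss_integrable n hb4).const_mul (ρ - 1)
  have j2 := (gauss_quad_integrable n hb4 (BB U θ m)).const_mul (ρ * (s ^ 2 / 2))
  have j3 := (gauss_integrable n (b := β / 16) (by positivity)).const_mul
    (KK β θ C * (s * U x) ^ 4 * K')
  have hle := integral_mono hHs ((j1.add j2).add j3) (fun ξ => by
    have h1 := pointwise P hβ hθ hθ2 hs hs1 hsu ξ
    have h2 := mul_le_mul_of_nonneg_left (hw ‖ξ‖ (norm_nonneg _))
      (show 0 ≤ KK β θ C * (s * U x) ^ 4 by positivity)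
    simp only [Pi.add_apply, BB_apply]
    refine h1.trans ((add_le_add_right h2 _).trans (le_of_eq ?_))
    ring)
  rw [integral_add' (j1.add j2) j3, integral_add' j1 j2, integral_const_mul, integral_const_mul,
    integral_const_mul, gauss_quad n hb4, BB_trace, ← hI0, ← hI1, ← hZ] at hle
  rw [hsym]
  have := mul_le_mul_of_nonneg_left hle (show 0 ≤ 1 / I0 by positivity)
  refine (add_le_add_right this 1).trans (le_of_eq ?_)
  field_simp
  ring

end integrated

section final

variable {n : ℕ} {U : Euc n → ℝ} {C β θ s : ℝ} {x : Euc n}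

lemma exp_split {a Y Y0 : ℝ} (ha : a ≤ 0) (hY : 0 ≤ Y) (hY0 : Y ≤ Y0) :
    exp (a + Y) ≤ exp a + Y * exp Y0 := by
  have h1 : exp Y ≤ 1 + Y * exp Y := by
    have h := add_one_le_exp (-Y)
    have h2 := mul_le_mul_of_nonneg_right h (exp_pos Y).le
    rw [← exp_add, neg_add_cancel, exp_zero] at h2
    linarith
  have h3 : exp a ≤ 1 := exp_le_one_iff.2 ha
  have h4 : exp Y ≤ exp Y0 := exp_le_exp.2 hY0
  rw [exp_add]
  calc exp a * exp Y ≤ exp a * (1 + Y * exp Y) := by gcongr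
    _ = exp a + exp a * (Y * exp Y) := by ring
    _ ≤ exp a + 1 * (Y * exp Y0) := by gcongr
    _ = _ := by ring

lemma lapl_le (P : Pot n U C) (m : Euc n) : lapl U m ≤ n * (C * U m) := by
  unfold lapl
  calc _ ≤ ∑ _i : Fin n, C * U m := by
        refine Finset.sum_le_sum fun i _ => ?_
        have h1 := Dk_le U 2 m (EuclideanSpace.single i (1:ℝ))
        rw [Dk_two] at h1
        have h2 := P.bd 2 (by norm_num) (by norm_num) m
        simp only [EuclideanSpace.norm_single, norm_one, one_pow, mul_one] at h1
        exact (le_abs_self _).trans (h1.trans h2)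
    _ = _ := by simp

lemma exponent_le (P : Pot n U C) (hβ : 0 < β) (hθ : 0 < θ) {c d k : ℝ} (hc : 0 < c)
    (hcθ : c + θ ≤ β) (hs : 0 < s) (hs1 : s < 1) (hsu : s * U x ≤ 1)
    (hL : lapl U (pm U s x) ≤ c * ‖gradient U (pm U s x)‖ ^ 2 - d + k) :
    θ * (U (pm U s x) - U x) + s ^ 2 / β * (θ * lapl U (pm U s x) +
        θ ^ 2 * ‖gradient U (pm U s x)‖ ^ 2) ≤
      -(θ * d / β) * s ^ 2 + (θ * (Pot.D C * C ^ 2 / 2 + 2 * Pot.D C ^ 2 * C) * (s * U x) ^ 4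
        + θ * k / β * s ^ 2) := by
  have hD := P.D_pos
  have hC := P.C_pos
  have hu := P.one_le x
  have hu0 : 0 < U x := by linarith
  have hmx : ‖pm U s x - x‖ ≤ s * C := by
    have := pm_dist P hs hsu (0 : Euc n)
    simpa using this
  have hsC : s * C ≤ 1 * C := by gcongr
  have hg := P.grad x
  have hv : pm U s x = x + (-(s ^ 2 • gradient U x)) := by unfold pm; abel
  have hmx' : pm U s x - x = -(s ^ 2 • gradient U x) := by unfold pm; abel
  have hnv : ‖pm U s x - x‖ = s ^ 2 * ‖gradient U x‖ := by
    rw [hmx', norm_neg, norm_smul, norm_of_nonneg (by positivity)]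
  have h1 : U (pm U s x) ≤ U x + inner ℝ (gradient U x) (-(s ^ 2 • gradient U x)) +
      Pot.D C * U x * ‖pm U s x - x‖ ^ 2 / 2 := by
    rw [hmx', hv]
    exact P.descent (by rw [← hmx']; linarith)
  rw [inner_neg_right, inner_smul_right, real_inner_self_eq_norm_sq, hnv] at h1
  have h2 := le_of_abs_le (P.grad_sq (x := x) (z := pm U s x) (by linarith))
  rw [hnv] at h2
  generalize ‖gradient U (pm U s x)‖ = G1 at *
  generalize lapl U (pm U s x) = L at *
  generalize U (pm U s x) = V at *
  have hG0 : 0 ≤ ‖gradient U x‖ := norm_nonneg _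
  generalize ‖gradient U x‖ = G at *
  generalize U x = u at *
  generalize Pot.D C = D at *
  have hu34 : u ^ 3 ≤ u ^ 4 := pow_le_pow_right₀ hu (by norm_num)
  have a1 : V - u ≤ -(s ^ 2 * G ^ 2) + D * C ^ 2 / 2 * (s * u) ^ 4 := by
    have : D * u * (s ^ 2 * G) ^ 2 / 2 ≤ D * C ^ 2 / 2 * (s * u) ^ 4 := by
      calc D * u * (s ^ 2 * G) ^ 2 / 2 ≤ D * u * (s ^ 2 * (C * u)) ^ 2 / 2 := by gcongr
        _ = D * C ^ 2 / 2 * (s ^ 4 * u ^ 3) := by ring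
        _ ≤ D * C ^ 2 / 2 * (s ^ 4 * u ^ 4) := by gcongr
        _ = _ := by ring
    linarith
  have a2 : s ^ 2 * G1 ^ 2 ≤ s ^ 2 * G ^ 2 + 2 * D ^ 2 * C * (s * u) ^ 4 := by
    have : s ^ 2 * (2 * (D * u) ^ 2 * (s ^ 2 * G)) ≤ 2 * D ^ 2 * C * (s * u) ^ 4 := by
      calc s ^ 2 * (2 * (D * u) ^ 2 * (s ^ 2 * G))
          ≤ s ^ 2 * (2 * (D * u) ^ 2 * (s ^ 2 * (C * u))) := by gcongr
        _ = 2 * D ^ 2 * C * (s ^ 4 * u ^ 3) := by ring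
        _ ≤ 2 * D ^ 2 * C * (s ^ 4 * u ^ 4) := by gcongr
        _ = _ := by ring
    have := mul_le_mul_of_nonneg_left h2 (sq_nonneg s)
    linarith
  have a3 : s ^ 2 / β * (θ * L + θ ^ 2 * G1 ^ 2) ≤
      s ^ 2 / β * (θ * (c * G1 ^ 2 - d + k) + θ ^ 2 * G1 ^ 2) := by gcongr
  have a4 : s ^ 2 / β * (θ * (c * G1 ^ 2 - d + k) + θ ^ 2 * G1 ^ 2) =
      θ * ((c + θ) * (s ^ 2 * G1 ^ 2) / β) - θ * d / β * s ^ 2 + θ * k / β * s ^ 2 := by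
    field_simp
    ring
  have a5 : (c + θ) * (s ^ 2 * G1 ^ 2) / β ≤ s ^ 2 * G ^ 2 + 2 * D ^ 2 * C * (s * u) ^ 4 := by
    refine le_trans ?_ a2
    rw [div_le_iff₀ hβ, mul_comm]
    gcongr
  have a6 := mul_le_mul_of_nonneg_left a5 hθ.le
  have a7 := mul_le_mul_of_nonneg_left a1 hθ.le
  linarith

end final

/-- Local drift condition for MALA. -/
theorem mala_local_drift (n : ℕ) (β : ℝ) (hβ : 0 < β)
    (U : Euc n → ℝ) (hU : Assumption1 n β U) :
    ∃ θ ∈ Set.Ioo (0:ℝ) (β - hU.c), ∃ C > (0:ℝ), ∃ γ > (0:ℝ), ∃ K > (0:ℝ),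
      ∀ h : ℝ, 0 < h → h < 1 → ∀ x : Euc n, U x < h ^ (-(1:ℝ)/2) →
        Integrable
          (fun y => accept n β h U x y * eulerDensity n β h U x y * exp (θ * U y)) volume ∧
        (∫ y, accept n β h U x y * eulerDensity n β h U x y * exp (θ * U y))
            + (1 - ∫ y, accept n β h U x y * eulerDensity n β h U x y) * exp (θ * U x)
          ≤ (exp (-γ * h) + C * U x ^ 4 * h ^ 2) * exp (θ * U x)
            + (K / γ) * (1 - exp (-γ * h)) := by
  obtain ⟨C, P⟩ := pot_of_assumption hU
  have hC := P.C_pos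
  have hD := P.D_pos
  have hc := hU.c_pos
  have hcβ := hU.c_lt
  have hd := hU.d_pos
  obtain ⟨c, hcdef⟩ : ∃ c, c = hU.c := ⟨_, rfl⟩
  obtain ⟨d, hddef⟩ : ∃ d, d = hU.d := ⟨_, rfl⟩
  have hdrift := hU.driftB
  rw [← hcdef] at hc hcβ hdrift ⊢
  rw [← hddef] at hd hdrift
  obtain ⟨EB, hEB⟩ : ∃ E, E = hU.EB := ⟨_, rfl⟩
  rw [← hEB] at hdrift
  obtain ⟨θ, hθd⟩ : ∃ θ, θ = (β - c) / 2 := ⟨_, rfl⟩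
  have hθ : 0 < θ := by rw [hθd]; linarith
  have hθ2 : θ ≤ β / 2 := by rw [hθd]; linarith
  have hcθ : c + θ ≤ β := by rw [hθd]; linarith
  obtain ⟨Kd, hKd, hmain⟩ := drift_le P hβ hθ hθ2
  obtain ⟨γ, hγd⟩ : ∃ γ, γ = θ * d / β := ⟨_, rfl⟩
  have hγ : 0 < γ := by rw [hγd]; positivity
  obtain ⟨C3, hC3d⟩ : ∃ C3, C3 = θ * (Pot.D C * C ^ 2 / 2 + 2 * Pot.D C ^ 2 * C) := ⟨_, rfl⟩
  have hC3 : 0 < C3 := by rw [hC3d]; positivity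
  obtain ⟨K0, hK0d⟩ : ∃ K0, K0 = n * (C * |EB|) + d := ⟨_, rfl⟩
  have hK0 : 0 < K0 := by rw [hK0d]; positivity
  obtain ⟨k1, hk1d⟩ : ∃ k1, k1 = θ * K0 / β := ⟨_, rfl⟩
  have hk1 : 0 < k1 := by rw [hk1d]; positivity
  obtain ⟨M, hMd⟩ : ∃ M, M = k1 * exp (C3 + k1) * exp (θ * (|EB| * exp (C * C))) := ⟨_, rfl⟩
  have hM : 0 < M := by rw [hMd]; positivity
  refine ⟨θ, ⟨hθ, by rw [hθd]; linarith⟩, C3 * exp (C3 + k1) + Kd, by positivity, γ, hγ,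
    (1 + γ) * M, by positivity, ?_⟩
  intro h hh hh1 x hx
  obtain ⟨s, hs, hsh⟩ : ∃ s : ℝ, 0 < s ∧ h = s ^ 2 := ⟨√h, sqrt_pos.2 hh, (sq_sqrt hh.le).symm⟩
  subst hsh
  have hs1 : s < 1 := by
    by_contra hcon
    have : 1 ≤ s ^ 2 := one_le_pow₀ (not_lt.1 hcon)
    linarith
  have hsu : s * U x ≤ 1 := by
    have e : (s ^ 2) ^ (-(1:ℝ) / 2) = s⁻¹ := by
      rw [← rpow_natCast s 2, ← rpow_mul hs.le, ← rpow_neg_one]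
      norm_num
    rw [e] at hx
    have := mul_le_mul_of_nonneg_left hx.le hs.le
    rwa [mul_inv_cancel₀ hs.ne'] at this
  refine ⟨int_exp_accept P hβ hθ hθ2 hs, ?_⟩
  refine (hmain s hs hs1 x hsu).trans ?_
  have hu := P.one_le x
  have hu0 : 0 < U x := by linarith
  have hmx : ‖pm U s x - x‖ ≤ s * C := by
    have := pm_dist P hs hsu (0 : Euc n)
    simpa using this
  have hsC : s * C ≤ 1 * C := by gcongr
  have hε1 : (s * U x) ^ 4 ≤ 1 := pow_le_one₀ (by positivity) hsu
  have hlast : M * s ^ 2 ≤ (1 + γ) * M / γ * (1 - exp (-γ * s ^ 2)) := by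
    have h1 : 1 + γ * s ^ 2 ≤ exp (γ * s ^ 2) := by linarith [add_one_le_exp (γ * s ^ 2)]
    have h2 : exp (-γ * s ^ 2) ≤ 1 / (1 + γ * s ^ 2) := by
      rw [neg_mul, exp_neg, ← one_div]
      exact one_div_le_one_div_of_le (by positivity) h1
    have h3 : γ * s ^ 2 / (1 + γ) ≤ 1 - exp (-γ * s ^ 2) := by
      have h4 : γ * s ^ 2 / (1 + γ) ≤ γ * s ^ 2 / (1 + γ * s ^ 2) := by
        gcongr
        exact mul_le_of_le_one_right hγ.le hh1.le
      have h5 : γ * s ^ 2 / (1 + γ * s ^ 2) = 1 - 1 / (1 + γ * s ^ 2) := by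
        field_simp
        ring
      linarith
    calc M * s ^ 2 = (1 + γ) * M / γ * (γ * s ^ 2 / (1 + γ)) := by field_simp
      _ ≤ _ := by gcongr
  -- general consequence of a bound on the Laplacian
  have key : ∀ k, 0 ≤ k → k ≤ K0 →
      lapl U (pm U s x) ≤ c * ‖gradient U (pm U s x)‖ ^ 2 - d + k →
      FF U θ x (pm U s x) * (1 + s ^ 2 / β * (θ * lapl U (pm U s x) +
        θ ^ 2 * ‖gradient U (pm U s x)‖ ^ 2)) ≤
      exp (-γ * s ^ 2) + (C3 * (s * U x) ^ 4 + θ * k / β * s ^ 2) * exp (C3 + k1) := by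
    intro k hk hkK hL
    have e1 := exponent_le P hβ hθ hc hcθ hs hs1 hsu hL
    rw [← hγd, ← hC3d] at e1
    have hk1' : θ * k / β * s ^ 2 ≤ k1 := by
      calc θ * k / β * s ^ 2 ≤ θ * K0 / β * 1 := by gcongr
        _ = k1 := by rw [hk1d, mul_one]
    have hX : C3 * (s * U x) ^ 4 ≤ C3 := mul_le_of_le_one_right hC3.le hε1
    have e2 := exp_split (a := -γ * s ^ 2) (Y := C3 * (s * U x) ^ 4 + θ * k / β * s ^ 2)
      (Y0 := C3 + k1) (by have : 0 < γ * s ^ 2 := by positivity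
                          linarith) (by positivity) (by linarith)
    refine le_trans ?_ e2
    refine le_trans ?_ (exp_le_exp.2 e1)
    rw [exp_add, FF]
    gcongr
    linarith [add_one_le_exp (s ^ 2 / β * (θ * lapl U (pm U s x) +
        θ ^ 2 * ‖gradient U (pm U s x)‖ ^ 2))]
  rcases lt_or_ge EB (U (pm U s x)) with hE | hE
  · have hL := hdrift _ hE
    have hm1 := P.one_le (pm U s x)
    have hdm : d ≤ d * U (pm U s x) := le_mul_of_one_le_right hd.le hm1
    have hk := key 0 le_rfl hK0.le (by linarith)
    have hpos : 0 ≤ M * s ^ 2 := by positivity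
    have hk2 := mul_le_mul_of_nonneg_left (add_le_add_left hk (Kd * (s * U x) ^ 4))
      (exp_pos (θ * U x)).le
    refine hk2.trans ?_
    simp only [mul_zero, zero_div, zero_mul, add_zero]
    have : exp (θ * U x) * (exp (-γ * s ^ 2) + C3 * (s * U x) ^ 4 * exp (C3 + k1) +
        Kd * (s * U x) ^ 4) = (exp (-γ * s ^ 2) + (C3 * exp (C3 + k1) + Kd) * U x ^ 4 *
        (s ^ 2) ^ 2) * exp (θ * U x) := by ring
    linarith
  · have hm1 := P.one_le (pm U s x)
    have hEa : U (pm U s x) ≤ |EB| := hE.trans (le_abs_self _)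
    have hL := lapl_le P (pm U s x)
    have hL2 : (n : ℝ) * (C * U (pm U s x)) ≤ n * (C * |EB|) := by gcongr
    have hg0 : 0 ≤ c * ‖gradient U (pm U s x)‖ ^ 2 := by positivity
    have hk := key K0 hK0.le le_rfl (by rw [hK0d]; linarith)
    rw [← hk1d] at hk
    have hk2 := mul_le_mul_of_nonneg_left (add_le_add_left hk (Kd * (s * U x) ^ 4))
      (exp_pos (θ * U x)).le
    refine hk2.trans ?_
    have hgr := P.growth (pm U s x) x
    have hxe : U x ≤ |EB| * exp (C * C) := by
      refine hgr.trans ?_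
      rw [norm_sub_rev]
      gcongr
      linarith
    have hx2 : exp (θ * U x) ≤ exp (θ * (|EB| * exp (C * C))) := by gcongr
    have hM2 : exp (θ * U x) * (k1 * s ^ 2 * exp (C3 + k1)) ≤ M * s ^ 2 := by
      calc _ ≤ exp (θ * (|EB| * exp (C * C))) * (k1 * s ^ 2 * exp (C3 + k1)) := by gcongr
        _ = _ := by rw [hMd]; ring
    have : exp (θ * U x) * (exp (-γ * s ^ 2) + (C3 * (s * U x) ^ 4 + k1 * s ^ 2) * exp (C3 + k1) +
        Kd * (s * U x) ^ 4) = (exp (-γ * s ^ 2) + (C3 * exp (C3 + k1) + Kd) * U x ^ 4 *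
        (s ^ 2) ^ 2) * exp (θ * U x) + exp (θ * U x) * (k1 * s ^ 2 * exp (C3 + k1)) := by ring
    linarith

end
end
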